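/- arXiv:2103.03868 — 9 statements merged into one kernel-verified Lean document; each statement's English description precedes it below -/
import Mathlib

section
/- Let V be a finite set with |V| = n, and let F : 2^V → ℝ be a nonnegative submodular set function with F(∅) = F(V) = 0. For each ordered pair u, v ∈ V with u ≠ v define the capacity c_{uv} = min { F(A) : A ⊆ V, u ∈ A, v ∉ A }, and define the cut function c⁺(A) = Σ_{u ∈ A, v ∉ A} c_{uv}. Then for every A ⊆ V, (4/n²) · c⁺(A) ≤ F(A) ≤ c⁺(A). -/
/-!
The lower bound holds because `A` itself competes in the minimum defining each `c u v` with
`u ∈ A`, `v ∉ A`, so that `c⁺(A) ≤ |A| |V \ A| F(A) ≤ (n² / 4) F(A)`.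

For the upper bound, let `S u v` be a minimiser in the definition of `c u v`. Then
`A = ⋃_{u ∈ A} ⋂_{v ∉ A} S u v`, and a nonnegative submodular function vanishing at `∅` and `V` is
subadditive under finite unions and finite intersections.
-/

/-- A set function `F` on the subsets of a finite ground set is *submodular* if
`F (A ∪ B) + F (A ∩ B) ≤ F A + F B` for all `A, B`. -/
def Submodular {V : Type*} [DecidableEq V] (F : Finset V → ℝ) : Prop :=
  ∀ A B : Finset V, F (A ∪ B) + F (A ∩ B) ≤ F A + F B

/-- The cut value of a set `S` for capacities `c`: `c⁺(S) = Σ_{u ∈ S, v ∉ S} c u v`. -/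
def cutVal {V : Type*} [Fintype V] [DecidableEq V] (c : V → V → ℝ) (S : Finset V) : ℝ :=
  ∑ u ∈ S, ∑ v ∈ Sᶜ, c u v

section Subadditivity

variable {V ι : Type*} [DecidableEq V] {F : Finset V → ℝ}

theorem Submodular.sup_le_sum (hF : Submodular F) (hnonneg : ∀ A, 0 ≤ F A) (h0 : F ∅ = 0)
    (s : Finset ι) (B : ι → Finset V) : F (s.sup B) ≤ ∑ i ∈ s, F (B i) := by
  have union_le {A C : Finset V} : F (A ∪ C) ≤ F A + F C :=
    (le_add_of_nonneg_right (hnonneg (A ∩ C))).trans (hF A C)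
  exact s.apply_sup_le_sum h0 union_le

theorem Submodular.inf_le_sum [Fintype V] (hF : Submodular F) (hnonneg : ∀ A, 0 ≤ F A)
    (hV : F Finset.univ = 0) (s : Finset ι) (B : ι → Finset V) :
    F (s.inf B) ≤ ∑ i ∈ s, F (B i) := by
  have inter_le {A C : Finset V} : F (A ∩ C) ≤ F A + F C :=
    (le_add_of_nonneg_left (hnonneg (A ∪ C))).trans (hF A C)
  exact s.apply_sup_le_sum (α := (Finset V)ᵒᵈ) hV inter_le

end Subadditivity

section CutBounds

variable {V : Type*} [DecidableEq V] [Fintype V]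

theorem sup_inf_eq_of_separating {A : Finset V} {S : V → V → Finset V}
    (hmem : ∀ u ∈ A, ∀ v ∈ Aᶜ, u ∈ S u v) (hnotMem : ∀ u ∈ A, ∀ v ∈ Aᶜ, v ∉ S u v) :
    (A.sup fun u => Aᶜ.inf (S u)) = A := by
  ext x
  simp only [Finset.mem_sup, Finset.mem_inf]
  constructor
  · rintro ⟨u, hu, hx⟩
    by_contra hxA
    have hxA' : x ∈ Aᶜ := Finset.mem_compl.2 hxA
    exact hnotMem u hu x hxA' (hx x hxA')
  · exact fun hx => ⟨x, hx, hmem x hx⟩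

theorem Submodular.le_cutVal {F : Finset V → ℝ} (hF : Submodular F) (hnonneg : ∀ A, 0 ≤ F A)
    (h0 : F ∅ = 0) (hV : F Finset.univ = 0) {c : V → V → ℝ} {A : Finset V}
    (hc : ∀ u ∈ A, ∀ v ∈ Aᶜ, ∃ S, u ∈ S ∧ v ∉ S ∧ F S ≤ c u v) : F A ≤ cutVal c A := by
  choose! S hmem hnotMem hle using hc
  calc F A = F (A.sup fun u => Aᶜ.inf (S u)) := by rw [sup_inf_eq_of_separating hmem hnotMem]
    _ ≤ ∑ u ∈ A, F (Aᶜ.inf (S u)) := hF.sup_le_sum hnonneg h0 A _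
    _ ≤ ∑ u ∈ A, ∑ v ∈ Aᶜ, F (S u v) :=
        Finset.sum_le_sum fun u _ => hF.inf_le_sum hnonneg hV Aᶜ (S u)
    _ ≤ cutVal c A :=
        Finset.sum_le_sum fun u hu => Finset.sum_le_sum fun v hv => hle u hu v hv

theorem cutVal_le_card_mul_card_mul {c : V → V → ℝ} {A : Finset V} {x : ℝ}
    (hc : ∀ u ∈ A, ∀ v ∈ Aᶜ, c u v ≤ x) : cutVal c A ≤ A.card * Aᶜ.card * x :=
  calc cutVal c A ≤ ∑ _u ∈ A, ∑ _v ∈ Aᶜ, x :=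
        Finset.sum_le_sum fun u hu => Finset.sum_le_sum fun v hv => hc u hu v hv
    _ = A.card * Aᶜ.card * x := by simp only [Finset.sum_const, nsmul_eq_mul, mul_assoc]

theorem four_mul_card_mul_card_compl_le (A : Finset V) :
    4 * A.card * Aᶜ.card ≤ Fintype.card V ^ 2 := by
  rw [← A.card_add_card_compl]
  exact four_mul_le_sq_add A.card Aᶜ.card

theorem four_div_card_sq_mul_cutVal_le {c : V → V → ℝ} {A : Finset V} {x : ℝ} (hx : 0 ≤ x)
    (hc : ∀ u ∈ A, ∀ v ∈ Aᶜ, c u v ≤ x) : 4 / (Fintype.card V : ℝ) ^ 2 * cutVal c A ≤ x := by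
  have hcard : (4 * A.card * Aᶜ.card : ℝ) ≤ (Fintype.card V : ℝ) ^ 2 := by
    exact_mod_cast four_mul_card_mul_card_compl_le A
  rw [div_mul_eq_mul_div]
  -- This form of the division bound also covers empty `V`, where `4 / 0 = 0`.
  refine div_le_of_le_mul₀ (sq_nonneg _) hx ?_
  calc 4 * cutVal c A ≤ 4 * (A.card * Aᶜ.card * x) := by
        gcongr
        exact cutVal_le_card_mul_card_mul hc
    _ = 4 * A.card * Aᶜ.card * x := by ring
    _ ≤ (Fintype.card V : ℝ) ^ 2 * x := by gcongr
    _ = x * (Fintype.card V : ℝ) ^ 2 := mul_comm _ _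

end CutBounds

/-- Let `F` be a nonnegative submodular function with `F ∅ = F V = 0` on a ground set of
size `n`.  With capacities `c u v = min { F A : u ∈ A, v ∉ A }` for `u ≠ v`, the resulting
cut function `c⁺` satisfies `(4/n²) c⁺(A) ≤ F(A) ≤ c⁺(A)` for every `A ⊆ V`. -/
theorem stmt1 {V : Type*} [DecidableEq V] [Fintype V]
    (n : ℕ) (hn : Fintype.card V = n)
    (F : Finset V → ℝ) (hsub : Submodular F) (hnonneg : ∀ A : Finset V, 0 ≤ F A)
    (h0 : F ∅ = 0) (hV : F Finset.univ = 0)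
    (c : V → V → ℝ)
    (hc : ∀ u v : V, u ≠ v →
      IsLeast {x : ℝ | ∃ A : Finset V, u ∈ A ∧ v ∉ A ∧ F A = x} (c u v)) :
    ∀ A : Finset V, (4 / (n : ℝ) ^ 2) * cutVal c A ≤ F A ∧ F A ≤ cutVal c A := by
  intro A
  subst hn
  have hne : ∀ u ∈ A, ∀ v ∈ Aᶜ, u ≠ v := fun u hu v hv =>
    ne_of_mem_of_not_mem hu (Finset.mem_compl.1 hv)
  constructor
  · refine four_div_card_sq_mul_cutVal_le (hnonneg A) fun u hu v hv => ?_
    exact (hc u v (hne u hu v hv)).2 ⟨A, hu, Finset.mem_compl.1 hv, rfl⟩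
  · refine hsub.le_cutVal hnonneg h0 hV fun u hu v hv => ?_
    obtain ⟨S, huS, hvS, hFS⟩ := (hc u v (hne u hu v hv)).1
    exact ⟨S, huS, hvS, hFS.le⟩
end

section
/- Let V be a finite set, let V_1, …, V_r ⊆ V, and for each i let F_i : 2^V → ℝ be a nonnegative submodular set function that is V_i-restricted (i.e., F_i(A) = F_i(A ∩ V_i) for all A ⊆ V) with F_i(∅) = F_i(V_i) = 0. For each ordered pair u ≠ v in V define c_{uv} = Σ_{i : u, v ∈ V_i} min { F_i(A) : A ⊆ V_i, u ∈ A, v ∉ A }, and let c⁺(A) = Σ_{u ∈ A, v ∉ A} c_{uv}. Then for every A ⊆ V, (4/M²) · c⁺(A) ≤ Σ_{i=1}^r F_i(A) ≤ c⁺(A), where M = max_{1 ≤ i ≤ r} |V_i|. -/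
open Finset

section

variable {V : Type*} [DecidableEq V]

namespace Submodular

variable {F : Finset V → ℝ}

lemma union_le (hF : Submodular F) (hnonneg : ∀ A, 0 ≤ F A) (A B : Finset V) :
    F (A ∪ B) ≤ F A + F B :=
  (le_add_of_nonneg_right (hnonneg (A ∩ B))).trans (hF A B)

lemma inter_le (hF : Submodular F) (hnonneg : ∀ A, 0 ≤ F A) (A B : Finset V) :
    F (A ∩ B) ≤ F A + F B :=
  (le_add_of_nonneg_left (hnonneg (A ∪ B))).trans (hF A B)

lemma biUnion_le {ι : Type*} (hF : Submodular F) (hnonneg : ∀ A, 0 ≤ F A)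
    (s : Finset ι) (S : ι → Finset V) :
    F (s.biUnion S) ≤ F ∅ + ∑ i ∈ s, F (S i) := by
  classical
  induction s using Finset.induction_on with
  | empty => simp
  | insert a s ha ih =>
    rw [biUnion_insert, sum_insert ha]
    linarith [hF.union_le hnonneg (S a) (s.biUnion S)]

lemma inter_inf_le {ι : Type*} [Fintype V] (hF : Submodular F) (hnonneg : ∀ A, 0 ≤ F A)
    (W : Finset V) (t : Finset ι) (S : ι → Finset V) :
    F (W ∩ t.inf S) ≤ F W + ∑ i ∈ t, F (S i) := by
  classical
  induction t using Finset.induction_on with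
  | empty => simp
  | insert a t ha ih =>
    rw [inf_insert, inf_eq_inter, inter_left_comm, sum_insert ha]
    linarith [hF.inter_le hnonneg (S a) (W ∩ t.inf S)]

end Submodular

lemma biUnion_inter_inf_eq_inter [Fintype V] {A W : Finset V} {S : V → V → Finset V}
    (hmem : ∀ u ∈ A ∩ W, ∀ v ∈ W \ A, u ∈ S u v)
    (hnotMem : ∀ u ∈ A ∩ W, ∀ v ∈ W \ A, v ∉ S u v) :
    ((A ∩ W).biUnion fun u => W ∩ (W \ A).inf (S u)) = A ∩ W := by
  ext x
  simp only [mem_biUnion, mem_inter (s₁ := W), mem_inf]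
  constructor
  · rintro ⟨u, hu, hxW, hx⟩
    by_contra hxA
    have hxd : x ∈ W \ A := mem_sdiff.2 ⟨hxW, fun h => hxA (mem_inter.2 ⟨h, hxW⟩)⟩
    exact hnotMem u hu x hxd (hx x hxd)
  · exact fun hx => ⟨x, hx, (mem_inter.1 hx).2, hmem x hx⟩

lemma four_mul_card_inter_mul_card_sdiff_le (A W : Finset V) :
    4 * (#(A ∩ W) * #(W \ A)) ≤ #W ^ 2 := by
  rw [← card_inter_add_card_sdiff W A, inter_comm W A, ← mul_assoc]
  exact four_mul_le_sq_add _ _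

/-- The values taken by `F` on the subsets of `W` that contain `u` but not `v`. The least of them
is the contribution of `F` to the capacity of the ordered pair `(u, v)`. -/
def separatingValues (F : Finset V → ℝ) (W : Finset V) (u v : V) : Set ℝ :=
  {x | ∃ A : Finset V, A ⊆ W ∧ u ∈ A ∧ v ∉ A ∧ F A = x}

/-- The capacities `m` restricted to the pairs inside `W`, extended by zero to all other pairs so
that the contributions of different sets `W` can be added. -/
def inducedCapacity (W : Finset V) (m : V → V → ℝ) (u v : V) : ℝ :=
  if u ∈ W ∧ v ∈ W then m u v else 0

variable [Fintype V]

lemma cutVal_congr {c c' : V → V → ℝ} (h : ∀ u v, u ≠ v → c u v = c' u v) (A : Finset V) :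
    cutVal c A = cutVal c' A :=
  sum_congr rfl fun u hu => sum_congr rfl fun v hv =>
    h u v (ne_of_mem_of_not_mem hu (mem_compl.1 hv))

lemma cutVal_sum {ι : Type*} (s : Finset ι) (c : ι → V → V → ℝ) (A : Finset V) :
    cutVal (fun u v => ∑ i ∈ s, c i u v) A = ∑ i ∈ s, cutVal (c i) A := by
  simp only [cutVal, sum_comm (t := s)]

lemma cutVal_inducedCapacity (W : Finset V) (m : V → V → ℝ) (A : Finset V) :
    cutVal (inducedCapacity W m) A = ∑ u ∈ A ∩ W, ∑ v ∈ W \ A, m u v := by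
  have hsdiff : W \ A = {v ∈ Aᶜ | v ∈ W} := by
    rw [filter_mem_eq_inter, inter_comm, sdiff_eq_inter_compl]
  rw [hsdiff, ← filter_mem_eq_inter]
  simp only [cutVal, inducedCapacity, sum_filter, ite_and, sum_ite_irrel, sum_const_zero]

variable {F : Finset V → ℝ} {W : Finset V} {m : V → V → ℝ}

lemma Submodular.apply_inter_le_cutVal_inducedCapacity (hF : Submodular F)
    (hnonneg : ∀ A, 0 ≤ F A) (hempty : F ∅ = 0) (hW : F W = 0)
    (hm : ∀ u ∈ W, ∀ v ∈ W, u ≠ v → m u v ∈ separatingValues F W u v) (A : Finset V) :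
    F (A ∩ W) ≤ cutVal (inducedCapacity W m) A := by
  have hsep : ∀ u ∈ A ∩ W, ∀ v ∈ W \ A, m u v ∈ separatingValues F W u v := by
    intro u hu v hv
    obtain ⟨⟨huA, huW⟩, hvW, hvA⟩ := mem_inter.1 hu, mem_sdiff.1 hv
    exact hm u huW v hvW (ne_of_mem_of_not_mem huA hvA)
  choose! S _ hmem hnotMem hval using hsep
  calc
    F (A ∩ W) = F ((A ∩ W).biUnion fun u => W ∩ (W \ A).inf (S u)) := by
      rw [biUnion_inter_inf_eq_inter hmem hnotMem]
    _ ≤ ∑ u ∈ A ∩ W, F (W ∩ (W \ A).inf (S u)) := by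
      simpa only [hempty, zero_add] using hF.biUnion_le hnonneg (A ∩ W) _
    _ ≤ ∑ u ∈ A ∩ W, ∑ v ∈ W \ A, F (S u v) := by
      gcongr with u
      simpa only [hW, zero_add] using hF.inter_inf_le hnonneg W (W \ A) (S u)
    _ = ∑ u ∈ A ∩ W, ∑ v ∈ W \ A, m u v :=
      sum_congr rfl fun u hu => sum_congr rfl (hval u hu)
    _ = cutVal (inducedCapacity W m) A := (cutVal_inducedCapacity W m A).symm

lemma four_mul_cutVal_inducedCapacity_le {A : Finset V} (hnonneg : 0 ≤ F (A ∩ W))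
    (hm : ∀ u ∈ W, ∀ v ∈ W, u ≠ v → m u v ∈ lowerBounds (separatingValues F W u v)) :
    4 * cutVal (inducedCapacity W m) A ≤ (#W : ℝ) ^ 2 * F (A ∩ W) := by
  have hle : ∀ u ∈ A ∩ W, ∀ v ∈ W \ A, m u v ≤ F (A ∩ W) := by
    intro u hu v hv
    obtain ⟨⟨huA, huW⟩, hvW, hvA⟩ := mem_inter.1 hu, mem_sdiff.1 hv
    exact hm u huW v hvW (ne_of_mem_of_not_mem huA hvA)
      ⟨A ∩ W, inter_subset_right, hu, fun h => hvA (mem_inter.1 h).1, rfl⟩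
  calc
    4 * cutVal (inducedCapacity W m) A = 4 * ∑ u ∈ A ∩ W, ∑ v ∈ W \ A, m u v := by
      rw [cutVal_inducedCapacity]
    _ ≤ 4 * ∑ _u ∈ A ∩ W, ∑ _v ∈ W \ A, F (A ∩ W) := by
      gcongr with u hu v hv
      exact hle u hu v hv
    _ = (4 * (#(A ∩ W) * #(W \ A)) : ℕ) * F (A ∩ W) := by
      simp only [sum_const, nsmul_eq_mul]
      push_cast
      ring
    _ ≤ (#W : ℝ) ^ 2 * F (A ∩ W) := by
      gcongr
      exact_mod_cast four_mul_card_inter_mul_card_sdiff_le A W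

lemma four_div_sq_mul_cutVal_inducedCapacity_le {A : Finset V} {N : ℕ} (hN : #W ≤ N)
    (hnonneg : 0 ≤ F (A ∩ W))
    (hm : ∀ u ∈ W, ∀ v ∈ W, u ≠ v → m u v ∈ lowerBounds (separatingValues F W u v)) :
    4 / (N : ℝ) ^ 2 * cutVal (inducedCapacity W m) A ≤ F (A ∩ W) := by
  rw [div_mul_eq_mul_div]
  -- This form of the division bound includes `N = 0`, where the left-hand side is `x / 0 = 0`.
  refine div_le_of_le_mul₀ (sq_nonneg _) hnonneg ?_
  calc
    4 * cutVal (inducedCapacity W m) A ≤ (#W : ℝ) ^ 2 * F (A ∩ W) :=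
      four_mul_cutVal_inducedCapacity_le hnonneg hm
    _ ≤ (N : ℝ) ^ 2 * F (A ∩ W) := by gcongr
    _ = F (A ∩ W) * (N : ℝ) ^ 2 := mul_comm _ _

end

/-- Let `F_1, …, F_r` be nonnegative submodular functions, each `V_i`-restricted with
`F_i ∅ = F_i V_i = 0`.  With capacities
`c u v = Σ_{i : u, v ∈ V_i} min { F_i A : A ⊆ V_i, u ∈ A, v ∉ A }` for `u ≠ v`, the cut
function satisfies `(4/M²) c⁺(A) ≤ Σ_i F_i(A) ≤ c⁺(A)` where `M = max_i |V_i|`. -/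
theorem stmt2 {V : Type*} [DecidableEq V] [Fintype V]
    (r : ℕ) (Vs : Fin r → Finset V)
    (F : Fin r → Finset V → ℝ)
    (hsub : ∀ i, Submodular (F i))
    (hnonneg : ∀ i (A : Finset V), 0 ≤ F i A)
    (hres : ∀ i (A : Finset V), F i A = F i (A ∩ Vs i))
    (h0 : ∀ i, F i ∅ = 0) (hVi : ∀ i, F i (Vs i) = 0)
    (m : Fin r → V → V → ℝ)
    (hm : ∀ (i : Fin r) (u v : V), u ≠ v → u ∈ Vs i → v ∈ Vs i →
      IsLeast {x : ℝ | ∃ A : Finset V, A ⊆ Vs i ∧ u ∈ A ∧ v ∉ A ∧ F i A = x} (m i u v))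
    (c : V → V → ℝ)
    (hc : ∀ u v : V, u ≠ v →
      c u v = ∑ i : Fin r, if u ∈ Vs i ∧ v ∈ Vs i then m i u v else 0)
    (M : ℕ) (hM : M = Finset.univ.sup fun i => (Vs i).card) :
    ∀ A : Finset V,
      (4 / (M : ℝ) ^ 2) * cutVal c A ≤ ∑ i, F i A ∧ ∑ i, F i A ≤ cutVal c A := by
  intro A
  have hcut : cutVal c A = ∑ i, cutVal (inducedCapacity (Vs i) (m i)) A :=
    (cutVal_congr hc A).trans (cutVal_sum univ (fun i => inducedCapacity (Vs i) (m i)) A)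
  have hcard : ∀ i, #(Vs i) ≤ M := fun i =>
    hM ▸ le_sup (f := fun i => #(Vs i)) (mem_univ i)
  rw [hcut]
  constructor
  · rw [mul_sum]
    refine sum_le_sum fun i _ => ?_
    rw [hres i A]
    exact four_div_sq_mul_cutVal_inducedCapacity_le (hcard i) (hnonneg i _)
      fun u hu v hv huv => (hm i u v huv hu hv).2
  · refine sum_le_sum fun i _ => ?_
    rw [hres i A]
    exact (hsub i).apply_inter_le_cutVal_inducedCapacity (hnonneg i) (h0 i) (hVi i)
      (fun u hu v hv huv => (hm i u v huv hu hv).1) A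
end

section
/- Let F : 2^V → ℝ be a submodular set function on a finite set V = {1, …, n} with F(∅) = 0, and let f be its Lovász extension. For each i ∈ V let ψ_i : ℝ → ℝ be strictly convex and differentiable with ψ_i'(α) → −∞ as α → −∞ and ψ_i'(α) → +∞ as α → +∞. Let x* be the unique minimizer over ℝ^n of x ↦ f(x) + Σ_{i ∈ V} ψ_i(x_i). Then for every α ∈ ℝ, the set A^α = { i ∈ V : x*_i ≥ α } is a minimizer over A ⊆ V of A ↦ F(A) + Σ_{i ∈ A} ψ_i'(α). -/
/-- The submodular base polytope of a set function `F` with `F ∅ = 0`. -/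
def basePolytope {V : Type*} [Fintype V] (F : Finset V → ℝ) : Set (V → ℝ) :=
  {w | (∀ A : Finset V, ∑ i ∈ A, w i ≤ F A) ∧ ∑ i, w i = F Finset.univ}

/-- The Lovász extension of `F`: `f x = max_{w ∈ B(F)} ⟨w, x⟩`. -/
noncomputable def lovasz {V : Type*} [Fintype V] (F : Finset V → ℝ) (x : V → ℝ) : ℝ :=
  sSup ((fun w : V → ℝ => ∑ i, w i * x i) '' basePolytope F)

/-!
Put `s i = -ψ' i (x* i)`. First-order optimality of `x*` says that `s` is a subgradient of the
convex function `f` at `x*`, and since `f` is the support function of the base polytope, `s` is a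
base maximizing `⟨·, x*⟩`.

If `x* j < x* i`, then no mass of `s` can be moved from `j` to `i` inside the base polytope, so some
tight set (`s(A) = F A`) contains `i` but not `j`. Tight sets form a lattice by submodularity, hence
the superlevel set `A^α` is tight. Therefore
`F A + ∑_{i ∈ A} ψ' i α ≥ ∑_{i ∈ A} (ψ' i α - ψ' i (x* i))` for all `A`, with equality for `A^α`,
and since `ψ' i` is monotone, `A^α` collects only nonpositive terms of the right-hand side and
leaves out only nonnegative ones.
-/

-- Minimizing `f + g` amounts to minimizing the differentiable function `(z, r) ↦ r + g z` over the
-- epigraph of `f`, whose tangent cone at `(x, f x)` contains `(y - x, f y - f x)`.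
theorem sub_le_of_isMinOn_add_of_hasFDerivAt {E : Type*} [NormedAddCommGroup E] [NormedSpace ℝ E]
    {s : Set E} {f g : E → ℝ} {g' : E →L[ℝ] ℝ} {x y : E} (hf : ConvexOn ℝ s f)
    (hg : HasFDerivAt g g' x) (hmin : IsMinOn (fun z => f z + g z) s x) (hx : x ∈ s) (hy : y ∈ s) :
    f x - g' (y - x) ≤ f y := by
  let epi : Set (E × ℝ) := {p | p.1 ∈ s ∧ f p.1 ≤ p.2}
  have hmin_epi : IsMinOn (fun p : E × ℝ => p.2 + g p.1) epi (x, f x) := fun p hp =>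
    (hmin hp.1).trans (add_le_add_left hp.2 _)
  have hderiv : HasFDerivAt (fun p : E × ℝ => p.2 + g p.1)
      (ContinuousLinearMap.snd ℝ E ℝ + g'.comp (ContinuousLinearMap.fst ℝ E ℝ)) (x, f x) :=
    hasFDerivAt_snd.add (HasFDerivAt.comp (x, f x) hg hasFDerivAt_fst)
  have htangent : (y, f y) - (x, f x) ∈ posTangentConeAt epi (x, f x) :=
    sub_mem_posTangentConeAt_of_segment_subset
      (hf.convex_epigraph.segment_subset ⟨hx, le_rfl⟩ ⟨hy, le_rfl⟩)
  have hnonneg : 0 ≤ (f y - f x) + g' (y - x) :=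
    hmin_epi.localize.hasFDerivWithinAt_nonneg hderiv.hasFDerivWithinAt htangent
  linarith

theorem eq_and_forall_le_of_subgradient {E : Type*} [AddCommGroup E] [Module ℝ E] {f : E → ℝ}
    (hf : ∀ c : ℝ, 0 ≤ c → ∀ z, f (c • z) = c * f z) {x : E} (l : E →ₗ[ℝ] ℝ)
    (hl : ∀ y, f x + l (y - x) ≤ f y) : f x = l x ∧ ∀ y, l y ≤ f y := by
  have hle : f x ≤ l x := by
    have h := hl ((0 : ℝ) • x)
    rw [hf 0 le_rfl, map_sub, map_smul, zero_smul] at h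
    linarith
  have hge : l x ≤ f x := by
    have h := hl ((2 : ℝ) • x)
    rw [hf 2 zero_le_two, map_sub, map_smul, smul_eq_mul] at h
    linarith
  refine ⟨hle.antisymm hge, fun y => ?_⟩
  have h := hl y
  rw [map_sub] at h
  linarith

section Lovasz

variable {V : Type*} [Fintype V] {F : Finset V → ℝ}

theorem bddAbove_dotProduct_basePolytope (F : Finset V → ℝ) (x : V → ℝ) :
    BddAbove ((fun w => w ⬝ᵥ x) '' basePolytope F) := by
  classical
  refine ⟨∑ i, max (F {i} * x i) ((F Finset.univ - F {i}ᶜ) * x i), ?_⟩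
  rintro _ ⟨w, ⟨hle, hsum⟩, rfl⟩
  refine Finset.sum_le_sum fun i _ => ?_
  have hupper : w i ≤ F {i} := by simpa only [Finset.sum_singleton] using hle {i}
  have hlower : F Finset.univ - F {i}ᶜ ≤ w i := by
    have hsplit := Finset.sum_add_sum_compl {i} w
    rw [Finset.sum_singleton] at hsplit
    linarith [hle {i}ᶜ]
  rcases le_total 0 (x i) with hx | hx
  · exact le_max_of_le_left (mul_le_mul_of_nonneg_right hupper hx)
  · exact le_max_of_le_right (mul_le_mul_of_nonpos_right hlower hx)

theorem dotProduct_le_lovasz {w : V → ℝ} (hw : w ∈ basePolytope F) (x : V → ℝ) :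
    w ⬝ᵥ x ≤ lovasz F x :=
  le_csSup (bddAbove_dotProduct_basePolytope F x) ⟨w, hw, rfl⟩

theorem lovasz_le (hne : (basePolytope F).Nonempty) {x : V → ℝ} {c : ℝ}
    (h : ∀ w ∈ basePolytope F, w ⬝ᵥ x ≤ c) : lovasz F x ≤ c :=
  csSup_le (hne.image _) (Set.forall_mem_image.2 h)

theorem lovasz_smul (F : Finset V → ℝ) {c : ℝ} (hc : 0 ≤ c) (x : V → ℝ) :
    lovasz F (c • x) = c * lovasz F x := by
  change sSup ((fun w => w ⬝ᵥ c • x) '' basePolytope F) =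
    c • sSup ((fun w => w ⬝ᵥ x) '' basePolytope F)
  rw [← Real.sSup_smul_of_nonneg hc, ← Set.image_smul, Set.image_image]
  simp only [dotProduct_smul]

theorem convexOn_lovasz (hne : (basePolytope F).Nonempty) :
    ConvexOn ℝ Set.univ (lovasz F) := by
  refine ⟨convex_univ, fun x _ y _ a b ha hb _ => lovasz_le hne fun w hw => ?_⟩
  rw [dotProduct_add, dotProduct_smul, dotProduct_smul]
  gcongr <;> exact dotProduct_le_lovasz hw _

theorem mem_basePolytope_of_forall_dotProduct_le_lovasz (hne : (basePolytope F).Nonempty)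
    {w : V → ℝ} (hw : ∀ x, w ⬝ᵥ x ≤ lovasz F x) : w ∈ basePolytope F := by
  classical
  have hle : ∀ A : Finset V, ∑ i ∈ A, w i ≤ F A := by
    intro A
    have hsum : ∀ u : V → ℝ, u ⬝ᵥ (fun i => if i ∈ A then 1 else 0) = ∑ i ∈ A, u i := by
      simp [dotProduct]
    rw [← hsum]
    exact (hw _).trans (lovasz_le hne fun u hu => (hsum u).trans_le (hu.1 A))
  have hge : -∑ i, w i ≤ -F Finset.univ := by
    rw [← dotProduct_one, ← dotProduct_neg]
    refine (hw _).trans (lovasz_le hne fun u hu => ?_)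
    rw [dotProduct_neg, dotProduct_one, hu.2]
  exact ⟨hle, (hle _).antisymm (neg_le_neg_iff.1 hge)⟩

theorem neg_mem_basePolytope_and_isMaxOn_of_isMinOn (hne : (basePolytope F).Nonempty)
    {ψ : V → ℝ → ℝ} {x d : V → ℝ} (hderiv : ∀ i, HasDerivAt (ψ i) (d i) (x i))
    (hmin : IsMinOn (fun y => lovasz F y + ∑ i, ψ i (y i)) Set.univ x) :
    -d ∈ basePolytope F ∧ IsMaxOn (fun w => w ⬝ᵥ x) (basePolytope F) (-d) := by
  have hfderiv : HasFDerivAt (fun y : V → ℝ => ∑ i, ψ i (y i))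
      (∑ i, d i • ContinuousLinearMap.proj (R := ℝ) i) x :=
    HasFDerivAt.fun_sum fun i _ => (hderiv i).comp_hasFDerivAt x (hasFDerivAt_apply i x)
  have hsubgrad : ∀ y, lovasz F x + dotProductBilin ℝ ℝ (-d) (y - x) ≤ lovasz F y := by
    intro y
    have h := sub_le_of_isMinOn_add_of_hasFDerivAt (convexOn_lovasz hne) hfderiv hmin
      (Set.mem_univ x) (Set.mem_univ y)
    simpa [dotProduct, sub_eq_add_neg] using h
  obtain ⟨hx, hle⟩ := eq_and_forall_le_of_subgradient (fun _ hc => lovasz_smul F hc) _ hsubgrad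
  exact ⟨mem_basePolytope_of_forall_dotProduct_le_lovasz hne hle,
    fun _ hw => (dotProduct_le_lovasz hw x).trans_eq hx⟩

end Lovasz

/-- A set is *tight* for a weight vector `w` if it attains equality in the constraint
`∑ i ∈ A, w i ≤ F A` of the base polytope. -/
def IsTight {V : Type*} (F : Finset V → ℝ) (w : V → ℝ) (A : Finset V) : Prop :=
  ∑ i ∈ A, w i = F A

namespace IsTight

variable {V : Type*} {F : Finset V → ℝ} {w : V → ℝ} {A B : Finset V}

theorem add_sum_le_add_sum (hw : ∀ C, ∑ i ∈ C, w i ≤ F C) (hA : IsTight F w A) {c : V → ℝ}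
    (hmem : ∀ i ∈ A, w i + c i ≤ 0) (hnotMem : ∀ i ∉ A, 0 ≤ w i + c i) (B : Finset V) :
    F A + ∑ i ∈ A, c i ≤ F B + ∑ i ∈ B, c i := by
  classical
  calc F A + ∑ i ∈ A, c i
      = ∑ i ∈ A, (w i + c i) := by rw [Finset.sum_add_distrib, hA]
    _ ≤ ∑ i ∈ A ∩ B, (w i + c i) :=
        Finset.sum_le_sum_of_subset_of_nonpos' Finset.inter_subset_left fun i hi _ => hmem i hi
    _ ≤ ∑ i ∈ B, (w i + c i) :=
        Finset.sum_le_sum_of_subset_of_nonneg Finset.inter_subset_right fun i hB hAB =>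
          hnotMem i fun hA => hAB (Finset.mem_inter.2 ⟨hA, hB⟩)
    _ = ∑ i ∈ B, w i + ∑ i ∈ B, c i := Finset.sum_add_distrib
    _ ≤ F B + ∑ i ∈ B, c i := add_le_add_left (hw B) _

variable [DecidableEq V]

theorem union (hF : Submodular F) (hw : ∀ C, ∑ i ∈ C, w i ≤ F C) (hA : IsTight F w A)
    (hB : IsTight F w B) : IsTight F w (A ∪ B) := by
  unfold IsTight at *
  linarith [hw (A ∪ B), hw (A ∩ B), hF A B, Finset.sum_union_inter (s₁ := A) (s₂ := B) (f := w)]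

theorem inter (hF : Submodular F) (hw : ∀ C, ∑ i ∈ C, w i ≤ F C) (hA : IsTight F w A)
    (hB : IsTight F w B) : IsTight F w (A ∩ B) := by
  unfold IsTight at *
  linarith [hw (A ∪ B), hw (A ∩ B), hF A B, Finset.sum_union_inter (s₁ := A) (s₂ := B) (f := w)]

end IsTight

section BasePolytope

variable {V : Type*} {F : Finset V → ℝ}

-- The greedy algorithm: each new element receives its marginal value.
theorem Submodular.exists_forall_sum_le_and_isTight [DecidableEq V] (hF : Submodular F)
    (hF0 : F ∅ = 0) (S : Finset V) :
    ∃ w : V → ℝ, (∀ A ⊆ S, ∑ i ∈ A, w i ≤ F A) ∧ IsTight F w S := by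
  induction S using Finset.induction_on with
  | empty =>
    refine ⟨0, fun A hA => ?_, by simp [IsTight, hF0]⟩
    simp [Finset.subset_empty.1 hA, hF0]
  | insert a S ha ih =>
    obtain ⟨w, hw, hS⟩ := ih
    refine ⟨Function.update w a (F (insert a S) - F S), fun A hA => ?_, ?_⟩
    · by_cases haA : a ∈ A
      · have hunion : A ∪ S = insert a S := by grind
        have hinter : A ∩ S = A \ {a} := by grind
        have hsubmod := hF A S
        rw [hunion, hinter] at hsubmod
        rw [Finset.sum_update_of_mem haA]
        linarith [hw (A \ {a}) (by grind)]
      · rw [Finset.sum_update_of_notMem haA]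
        exact hw A ((Finset.subset_insert_iff_of_notMem haA).1 hA)
    · rw [IsTight, Finset.sum_insert ha, Function.update_self, Finset.sum_update_of_notMem ha, hS,
        sub_add_cancel]

variable [Fintype V] {w x : V → ℝ} {i j : V}

theorem basePolytope_nonempty [DecidableEq V] (hF : Submodular F) (hF0 : F ∅ = 0) :
    (basePolytope F).Nonempty := by
  obtain ⟨w, hle, htight⟩ := hF.exists_forall_sum_le_and_isTight hF0 Finset.univ
  exact ⟨w, fun A => hle A A.subset_univ, htight⟩

theorem add_single_sub_single_mem_basePolytope [DecidableEq V] (hw : w ∈ basePolytope F) {ε : ℝ}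
    (hε : 0 ≤ ε) (hslack : ∀ A : Finset V, i ∈ A → j ∉ A → ∑ k ∈ A, w k + ε ≤ F A) :
    w + (Pi.single i ε - Pi.single j ε) ∈ basePolytope F := by
  have hsum : ∀ A : Finset V, ∑ k ∈ A, (w + (Pi.single i ε - Pi.single j ε) : V → ℝ) k =
      ∑ k ∈ A, w k + ((if i ∈ A then ε else 0) - if j ∈ A then ε else 0) := by
    intro A
    simp only [Pi.add_apply, Pi.sub_apply, Finset.sum_add_distrib, Finset.sum_sub_distrib,
      Finset.sum_pi_single']
  refine ⟨fun A => ?_, (hsum _).trans (by simp [hw.2])⟩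
  rw [hsum]
  have hA := hw.1 A
  have hslackA := hslack A
  split_ifs with hi hj hj
  · linarith
  · linarith [hslackA hi hj]
  · linarith
  · linarith

theorem exists_isTight_of_isMaxOn (hw : w ∈ basePolytope F)
    (hmax : IsMaxOn (fun u => u ⬝ᵥ x) (basePolytope F) w) (hij : x j < x i) :
    ∃ A : Finset V, i ∈ A ∧ j ∉ A ∧ IsTight F w A := by
  classical
  by_contra! hslack
  obtain ⟨ε, hε, hpos⟩ : ∃ ε : ℝ,
      (∀ A : Finset V, i ∈ A → j ∉ A → ∑ k ∈ A, w k + ε ≤ F A) ∧ 0 < ε := by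
    refine Filter.Eventually.exists (f := nhdsWithin 0 (Set.Ioi 0))
      (.and ?_ self_mem_nhdsWithin)
    simp only [Filter.eventually_all]
    intro A hi hj
    have hlt : 0 < F A - ∑ k ∈ A, w k := sub_pos.2 ((hw.1 A).lt_of_ne (hslack A hi hj))
    filter_upwards [Ioo_mem_nhdsGT hlt] with ε hε
    linarith [hε.2]
  have hle : (w + (Pi.single i ε - Pi.single j ε)) ⬝ᵥ x ≤ w ⬝ᵥ x :=
    hmax (add_single_sub_single_mem_basePolytope hw hpos.le hε)
  rw [add_dotProduct, sub_dotProduct, single_dotProduct, single_dotProduct] at hle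
  linarith [mul_lt_mul_of_pos_left hij hpos]

-- With tight sets `D i j` separating `i` from `j`, one has `A = ⋃_{i ∈ A} ⋂_{j ∉ A} D i j`.
theorem isTight_of_isMaxOn [DecidableEq V] (hF : Submodular F) (hF0 : F ∅ = 0)
    (hw : w ∈ basePolytope F) (hmax : IsMaxOn (fun u => u ⬝ᵥ x) (basePolytope F) w)
    {A : Finset V} (hA : ∀ i ∈ A, ∀ j ∉ A, x j < x i) : IsTight F w A := by
  have hseparate : ∀ i j, ∃ D : Finset V, i ∈ A → j ∉ A → i ∈ D ∧ j ∉ D ∧ IsTight F w D := by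
    intro i j
    by_cases h : i ∈ A ∧ j ∉ A
    · obtain ⟨D, hD⟩ := exists_isTight_of_isMaxOn hw hmax (hA i h.1 j h.2)
      exact ⟨D, fun _ _ => hD⟩
    · exact ⟨∅, fun hi hj => absurd ⟨hi, hj⟩ h⟩
  choose D hD using hseparate
  have hcover : A = A.sup fun i => Aᶜ.inf (D i) := by
    ext k
    simp only [Finset.mem_sup, Finset.mem_inf, Finset.mem_compl]
    refine ⟨fun hk => ⟨k, hk, fun j hj => (hD k j hk hj).1⟩, ?_⟩
    rintro ⟨i, hi, hk⟩
    by_contra hkA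
    exact (hD i k hi hkA).2.1 (hk k hkA)
  rw [hcover]
  refine Finset.sup_induction (by simp [IsTight, hF0]) (fun _ h _ => h.union hF hw.1)
    fun i hi => ?_
  exact Finset.inf_induction hw.2 (fun _ h _ => h.inter hF hw.1) fun j hj =>
    (hD i j hi (Finset.mem_compl.1 hj)).2.2

end BasePolytope

theorem monotone_of_convexOn_of_hasDerivAt {f f' : ℝ → ℝ} (hf : ConvexOn ℝ Set.univ f)
    (hf' : ∀ x, HasDerivAt f (f' x) x) : Monotone f' := by
  have hderiv : deriv f = f' := funext fun x => (hf' x).deriv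
  rw [← hderiv, ← monotoneOn_univ]
  exact hf.monotoneOn_deriv fun x _ => (hf' x).differentiableAt

theorem stmt5_general {V : Type*} [DecidableEq V] [Fintype V]
    (F : Finset V → ℝ) (hF : Submodular F) (hF0 : F ∅ = 0)
    (ψ ψ' : V → ℝ → ℝ)
    (hconv : ∀ i, ConvexOn ℝ Set.univ (ψ i))
    (hderiv : ∀ i x, HasDerivAt (ψ i) (ψ' i x) x)
    (xstar : V → ℝ)
    (hmin : ∀ x : V → ℝ,
      lovasz F xstar + ∑ i, ψ i (xstar i) ≤ lovasz F x + ∑ i, ψ i (x i))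
    (α : ℝ) (Aα : Finset V) (hAα : ∀ i : V, i ∈ Aα ↔ α ≤ xstar i) (A : Finset V) :
    F Aα + ∑ i ∈ Aα, ψ' i α ≤ F A + ∑ i ∈ A, ψ' i α := by
  have hmono i : Monotone (ψ' i) := monotone_of_convexOn_of_hasDerivAt (hconv i) (hderiv i)
  have hnotMem : ∀ i ∉ Aα, xstar i < α := fun i hi => not_le.1 (mt (hAα i).2 hi)
  obtain ⟨hbase, hmax⟩ := neg_mem_basePolytope_and_isMaxOn_of_isMinOn
    (basePolytope_nonempty hF hF0) (fun i => hderiv i (xstar i)) fun x _ => hmin x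
  have htight := isTight_of_isMaxOn hF hF0 hbase hmax fun i hi j hj =>
    (hnotMem j hj).trans_le ((hAα i).1 hi)
  refine htight.add_sum_le_add_sum hbase.1 (fun i hi => ?_) (fun i hi => ?_) A
  · exact neg_add_nonpos_iff.2 (hmono i ((hAα i).1 hi))
  · exact le_neg_add_iff_le.2 (hmono i (hnotMem i hi).le)

/-- Let `F` be submodular with `F ∅ = 0` and `f` its Lovász extension, and let each
`ψ_i` be strictly convex and differentiable with `ψ_i' → ∓∞` at `∓∞`. If `x*` is the
unique minimizer of `x ↦ f x + Σ_i ψ_i (x i)`, then for every `α`, the set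
`A^α = { i : x*_i ≥ α }` minimizes `A ↦ F A + Σ_{i ∈ A} ψ_i'(α)`. -/
theorem stmt5 {V : Type*} [DecidableEq V] [Fintype V]
    (F : Finset V → ℝ) (hF : Submodular F) (hF0 : F ∅ = 0)
    (ψ ψ' : V → ℝ → ℝ)
    (hconv : ∀ i, StrictConvexOn ℝ Set.univ (ψ i))
    (hderiv : ∀ i x, HasDerivAt (ψ i) (ψ' i x) x)
    (hbot : ∀ i, Filter.Tendsto (ψ' i) Filter.atBot Filter.atBot)
    (htop : ∀ i, Filter.Tendsto (ψ' i) Filter.atTop Filter.atTop)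
    (xstar : V → ℝ)
    (hmin : ∀ x : V → ℝ,
      lovasz F xstar + ∑ i, ψ i (xstar i) ≤ lovasz F x + ∑ i, ψ i (x i))
    (huniq : ∀ y : V → ℝ,
      (∀ x : V → ℝ, lovasz F y + ∑ i, ψ i (y i) ≤ lovasz F x + ∑ i, ψ i (x i)) →
      y = xstar) :
    ∀ (α : ℝ) (Aα : Finset V), (∀ i : V, i ∈ Aα ↔ α ≤ xstar i) →
      ∀ A : Finset V, F Aα + ∑ i ∈ Aα, ψ' i α ≤ F A + ∑ i ∈ A, ψ' i α :=
  stmt5_general F hF hF0 ψ ψ' (fun i => (hconv i).convexOn) hderiv xstar hmin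
end

section
/- Let F : 2^V → ℝ be a submodular set function on a finite set V, and for each i ∈ V let ψ_i : ℝ → ℝ be strictly convex and differentiable. Let α > β be real numbers, let A^α be a minimizer over A ⊆ V of A ↦ F(A) + Σ_{i ∈ A} ψ_i'(α), and let A^β be a minimizer over A ⊆ V of A ↦ F(A) + Σ_{i ∈ A} ψ_i'(β). Then A^α ⊆ A^β. -/
/-!
Passing from `(A, B)` to `(A ∩ B, A ∪ B)` moves the elements of `A \ B` from the first set to the
second. If the first set is weighted by `u` and the second by `v`, submodularity shows that this
exchange lowers the total cost by at least `∑ i ∈ A \ B, (u i - v i)`. Minimality of `A` and `B`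
makes this sum nonpositive, while `v < u` makes it positive unless `A ⊆ B`. Strict convexity gives
`v < u` for the derivatives `u i = ψ' i α` and `v i = ψ' i β`.
-/

theorem hasDerivWithinAt_lt_of_strictConvexOn {S : Set ℝ} {f : ℝ → ℝ} {x y f'x f'y : ℝ}
    (hf : StrictConvexOn ℝ S f) (hx : x ∈ S) (hy : y ∈ S) (hxy : x < y)
    (hf'x : HasDerivWithinAt f f'x S x) (hf'y : HasDerivWithinAt f f'y S y) :
    f'x < f'y :=
  (hf.lt_slope_of_hasDerivWithinAt hx hy hxy hf'x).trans
    (hf.slope_lt_of_hasDerivWithinAt hx hy hxy hf'y)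

namespace Submodular

variable {V : Type*} [DecidableEq V] {F : Finset V → ℝ}

theorem inter_add_union_add_sum_sdiff_le (hF : Submodular F) (u v : V → ℝ) (A B : Finset V) :
    (F (A ∩ B) + ∑ i ∈ A ∩ B, u i) + (F (A ∪ B) + ∑ i ∈ A ∪ B, v i) + ∑ i ∈ A \ B, (u i - v i) ≤
      (F A + ∑ i ∈ A, u i) + (F B + ∑ i ∈ B, v i) := by
  have hinter : ∑ i ∈ A ∩ B, u i + ∑ i ∈ A \ B, u i = ∑ i ∈ A, u i :=
    Finset.sum_inter_add_sum_sdiff A B u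
  have hunion : ∑ i ∈ A ∪ B, v i = ∑ i ∈ A \ B, v i + ∑ i ∈ B, v i := by
    rw [← Finset.sdiff_union_self_eq_union, Finset.sum_union Finset.sdiff_disjoint]
  rw [Finset.sum_sub_distrib]
  linarith [hF A B]

theorem subset_of_lt_of_forall_le (hF : Submodular F) {u v : V → ℝ} {A B : Finset V}
    (huv : ∀ i ∈ A \ B, v i < u i)
    (hA : ∀ C ⊆ A, F A + ∑ i ∈ A, u i ≤ F C + ∑ i ∈ C, u i)
    (hB : ∀ C, B ⊆ C → F B + ∑ i ∈ B, v i ≤ F C + ∑ i ∈ C, v i) :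
    A ⊆ B := by
  by_contra hAB
  have hpos : 0 < ∑ i ∈ A \ B, (u i - v i) :=
    Finset.sum_pos (fun i hi => sub_pos.mpr (huv i hi)) (Finset.sdiff_nonempty.mpr hAB)
  have hexchange := hF.inter_add_union_add_sum_sdiff_le u v A B
  linarith [hA (A ∩ B) Finset.inter_subset_left, hB (A ∪ B) Finset.subset_union_right]

end Submodular

theorem stmt6_general {V : Type*} [DecidableEq V] {F : Finset V → ℝ} (hF : Submodular F)
    {S : Set ℝ} {ψ ψ' : V → ℝ → ℝ}
    (hconv : ∀ i, StrictConvexOn ℝ S (ψ i))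
    (hderiv : ∀ i, ∀ x ∈ S, HasDerivWithinAt (ψ i) (ψ' i x) S x)
    {α β : ℝ} (hα : α ∈ S) (hβ : β ∈ S) (hαβ : β < α)
    {Aα Aβ : Finset V}
    (hAα : ∀ A ⊆ Aα, F Aα + ∑ i ∈ Aα, ψ' i α ≤ F A + ∑ i ∈ A, ψ' i α)
    (hAβ : ∀ A, Aβ ⊆ A → F Aβ + ∑ i ∈ Aβ, ψ' i β ≤ F A + ∑ i ∈ A, ψ' i β) :
    Aα ⊆ Aβ := by
  have hlt (i : V) : ψ' i β < ψ' i α :=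
    hasDerivWithinAt_lt_of_strictConvexOn (hconv i) hβ hα hαβ (hderiv i β hβ) (hderiv i α hα)
  exact hF.subset_of_lt_of_forall_le (fun i _ => hlt i) hAα hAβ

/-- Let `F` be submodular and each `ψ_i` strictly convex and differentiable.  If `α > β`,
`A^α` minimizes `A ↦ F A + Σ_{i ∈ A} ψ_i'(α)` and `A^β` minimizes
`A ↦ F A + Σ_{i ∈ A} ψ_i'(β)`, then `A^α ⊆ A^β`. -/
theorem stmt6 {V : Type*} [DecidableEq V] [Fintype V]
    (F : Finset V → ℝ) (hF : Submodular F)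
    (ψ ψ' : V → ℝ → ℝ)
    (hconv : ∀ i, StrictConvexOn ℝ Set.univ (ψ i))
    (hderiv : ∀ i x, HasDerivAt (ψ i) (ψ' i x) x)
    (α β : ℝ) (hαβ : β < α)
    (Aα Aβ : Finset V)
    (hAα : ∀ A : Finset V, F Aα + ∑ i ∈ Aα, ψ' i α ≤ F A + ∑ i ∈ A, ψ' i α)
    (hAβ : ∀ A : Finset V, F Aβ + ∑ i ∈ Aβ, ψ' i β ≤ F A + ∑ i ∈ A, ψ' i β) :
    Aα ⊆ Aβ :=
  stmt6_general hF hconv (fun i x _ => (hderiv i x).hasDerivWithinAt) (Set.mem_univ α)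
    (Set.mem_univ β) hαβ (fun A _ => hAα A) (fun A _ => hAβ A)
end

section
/- Let F : 2^V → ℝ be a submodular set function on V = {1, …, n} with F(∅) = 0. For each i ∈ V let ψ_i : ℝ → ℝ be twice differentiable with σ ≤ ψ_i''(x) ≤ L for all x, where 0 < σ ≤ L, and let ψ_i* be its Fenchel conjugate (which is differentiable, with (ψ_i*)' being 1/σ-Lipschitz, since ψ_i is σ-strongly convex). Let w* be a minimizer over B(F) of w ↦ Σ_{i ∈ V} ψ_i*(−w_i), and let w ∈ B(F) satisfy Σ_{i ∈ V} ψ_i*(−w_i) ≤ Σ_{i ∈ V} ψ_i*(−w*_i) + ε for some ε ≥ 0. Define x, x* ∈ ℝ^n by x_i = (ψ_i*)'(−w_i) and x*_i = (ψ_i*)'(−w*_i). Then ‖x − x*‖₂ ≤ √(2 L ε / σ²). -/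
/-- The Fenchel conjugate of `g : ℝ → ℝ`: `g* z = sup_x (z x − g x)`. -/
noncomputable def fenchel (g : ℝ → ℝ) (z : ℝ) : ℝ :=
  sSup (Set.range fun x : ℝ => z * x - g x)

/-!
If `f` is `σ`-strongly convex and its conjugate `g` has derivative `p` at `z`, then `p` is the
minimiser of the `σ`-strongly convex function `x ↦ f x - z * x`: any minimiser `q` satisfies
`g y ≥ y * q - f q` for all `y`, with equality at `y = z`, so `g' z = q`. Let likewise `q = g' y`.
Quadratic growth of `x ↦ f x - y * x` at its minimiser `q`, evaluated at `p`, says precisely that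
`g z + (y - z) * p + σ / 2 * (q - p) ^ 2 ≤ g y`.

Summing this over the coordinates with `y = -w i` and `z = -wstar i`, the linear term is
nonnegative by first-order optimality of `wstar` on the convex set, so `σ / 2 * ‖x - xstar‖² ≤ ε`.
-/

open Filter Set Topology

section StrongConvexity

theorem add_le_of_isMinOn_of_uniformConvexOn {E : Type*} [NormedAddCommGroup E] [NormedSpace ℝ E]
    {s : Set E} {φ : ℝ → ℝ} {f : E → ℝ} (hf : UniformConvexOn s φ f) {x y : E} (hx : x ∈ s)
    (hmin : IsMinOn f s x) (hy : y ∈ s) : f x + φ ‖x - y‖ ≤ f y := by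
  have hweight : ∀ᶠ b : ℝ in 𝓝[>] 0, f x + (1 - b) * φ ‖x - y‖ ≤ f y := by
    filter_upwards [Ioo_mem_nhdsGT (zero_lt_one (α := ℝ))] with b ⟨hb, hb1⟩
    have hseg := hf.2 hx hy (sub_nonneg.2 hb1.le) hb.le (sub_add_cancel 1 b)
    have hle := hmin (hf.1 hx hy (sub_nonneg.2 hb1.le) hb.le (sub_add_cancel 1 b))
    simp only [mem_ofPred_eq, smul_eq_mul] at hseg hle
    refine le_of_mul_le_mul_left ?_ hb
    linarith
  have hlim : Tendsto (fun b : ℝ => f x + (1 - b) * φ ‖x - y‖) (𝓝[>] 0)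
      (𝓝 (f x + φ ‖x - y‖)) :=
    (Continuous.tendsto' (by fun_prop) 0 _ (by simp)).mono_left nhdsWithin_le_nhds
  exact le_of_tendsto hlim hweight

theorem strongConvexOn_of_hasDerivWithinAt2_ge {D : Set ℝ} (hD : Convex ℝ D) {f f' f'' : ℝ → ℝ}
    {m : ℝ} (hf : ContinuousOn f D)
    (hf' : ∀ x ∈ interior D, HasDerivWithinAt f (f' x) (interior D) x)
    (hf'' : ∀ x ∈ interior D, HasDerivWithinAt f' (f'' x) (interior D) x)
    (hm : ∀ x ∈ interior D, m ≤ f'' x) : StrongConvexOn D m f := by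
  simp only [strongConvexOn_iff_convex, Real.norm_eq_abs, sq_abs]
  refine convexOn_of_hasDerivWithinAt2_nonneg hD (f' := fun x => f' x - m * x)
    (f'' := fun x => f'' x - m) (hf.sub (by fun_prop)) (fun x hx => ?_) (fun x hx => ?_)
    fun x hx => sub_nonneg.2 (hm x hx)
  · exact ((hf' x hx).fun_sub ((hasDerivWithinAt_pow 2 x).const_mul (m / 2))).congr_deriv
      (by push_cast; ring)
  · exact ((hf'' x hx).fun_sub ((hasDerivWithinAt_id x _).const_mul m)).congr_deriv (by simp)

variable {E : Type*} [NormedAddCommGroup E] [InnerProductSpace ℝ E] [FiniteDimensional ℝ E]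
  {f : E → ℝ} {m : ℝ}

theorem exists_add_le_of_strongConvexOn (hf : StrongConvexOn univ m f) :
    ∃ (l : E →L[ℝ] ℝ) (c : ℝ), ∀ x, m / 2 * ‖x‖ ^ 2 + l x + c ≤ f x := by
  have hconv := strongConvexOn_iff_convex.1 hf
  obtain ⟨l, c, hle, -⟩ := hconv.exists_affine_le_of_lt (𝕜 := ℝ) (mem_univ 0) (sub_one_lt _)
    isClosed_univ (hconv.locallyLipschitz.continuous.lowerSemicontinuous.lowerSemicontinuousOn _)
  refine ⟨l, c, fun x => ?_⟩
  have hx : l x + c ≤ f x - m / 2 * ‖x‖ ^ 2 := by simpa using hle ⟨x, mem_univ x⟩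
  linarith

theorem tendsto_cocompact_atTop_of_strongConvexOn (hm : 0 < m) (hf : StrongConvexOn univ m f) :
    Tendsto f (cocompact E) atTop := by
  obtain ⟨l, c, hle⟩ := exists_add_le_of_strongConvexOn hf
  have hquad : Tendsto (fun r : ℝ => r * (m / 2 * r - ‖l‖) + c) atTop atTop :=
    tendsto_atTop_add_const_right _ _ <| tendsto_id.atTop_mul_atTop₀ <|
      tendsto_atTop_add_const_right _ _ <| tendsto_id.const_mul_atTop (half_pos hm)
  refine tendsto_atTop_mono (fun x => ?_) (hquad.comp (tendsto_norm_cocompact_atTop))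
  have hl : -(‖l‖ * ‖x‖) ≤ l x := (abs_le.1 (l.le_opNorm x)).1
  calc ‖x‖ * (m / 2 * ‖x‖ - ‖l‖) + c = m / 2 * ‖x‖ ^ 2 + -(‖l‖ * ‖x‖) + c := by ring
    _ ≤ m / 2 * ‖x‖ ^ 2 + l x + c := by gcongr
    _ ≤ f x := hle x

theorem exists_isMinOn_of_strongConvexOn (hm : 0 < m) (hf : StrongConvexOn univ m f) :
    ∃ x, IsMinOn f univ x := by
  have hcont := (hf.strictConvexOn hm).convexOn.locallyLipschitz.continuous
  obtain ⟨x, hx⟩ := hcont.exists_forall_le (tendsto_cocompact_atTop_of_strongConvexOn hm hf)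
  exact ⟨x, fun y _ => hx y⟩

end StrongConvexity

section FenchelConjugate

variable {f : ℝ → ℝ} {p q y z : ℝ}

theorem isGreatest_range_mul_sub_of_isMinOn (hp : IsMinOn (fun x => f x - z * x) univ p) :
    IsGreatest (range fun x => z * x - f x) (z * p - f p) := by
  refine ⟨⟨p, rfl⟩, ?_⟩
  rintro _ ⟨x, rfl⟩
  have hle : f p - z * p ≤ f x - z * x := hp (mem_univ x)
  linarith

theorem fenchel_eq_of_isMinOn (hp : IsMinOn (fun x => f x - z * x) univ p) :
    fenchel f z = z * p - f p :=
  (isGreatest_range_mul_sub_of_isMinOn hp).csSup_eq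

theorem eq_of_hasDerivAt_fenchel_of_isMinOn
    (hbdd : ∀ᶠ y in 𝓝 z, BddAbove (range fun x => y * x - f x))
    (hp : HasDerivAt (fenchel f) p z) (hq : IsMinOn (fun x => f x - z * x) univ q) : p = q := by
  have hmin : IsLocalMin (fun y => fenchel f y - y * q) z := by
    filter_upwards [hbdd] with y hy
    have hyoung : y * q - f q ≤ fenchel f y := le_csSup hy ⟨q, rfl⟩
    linarith [fenchel_eq_of_isMinOn hq]
  have hderiv : HasDerivAt (fun y => fenchel f y - y * q) (p - q) z := by
    simpa using hp.fun_sub ((hasDerivAt_id z).mul_const q)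
  exact sub_eq_zero.1 (hmin.hasDerivAt_eq_zero hderiv)

variable {σ : ℝ}

theorem strongConvexOn_sub_mul {s : Set ℝ} (hf : StrongConvexOn s σ f) (z : ℝ) :
    StrongConvexOn s σ fun x => f x - z * x := by
  have hlin : ConcaveOn ℝ s fun x : ℝ => z * x := (LinearMap.mul ℝ ℝ z).concaveOn hf.1
  simpa [StrongConvexOn] using! hf.sub hlin.uniformConcaveOn_zero

theorem isMinOn_of_hasDerivAt_fenchel (hσ : 0 < σ) (hf : StrongConvexOn univ σ f)
    (hp : HasDerivAt (fenchel f) p z) : IsMinOn (fun x => f x - z * x) univ p := by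
  have hex (y : ℝ) := exists_isMinOn_of_strongConvexOn hσ (strongConvexOn_sub_mul hf y)
  have hbdd (y : ℝ) : BddAbove (range fun x => y * x - f x) :=
    let ⟨_, hr⟩ := hex y
    (isGreatest_range_mul_sub_of_isMinOn hr).bddAbove
  obtain ⟨q, hq⟩ := hex z
  rwa [eq_of_hasDerivAt_fenchel_of_isMinOn (Eventually.of_forall hbdd) hp hq]

theorem fenchel_add_mul_add_sq_le (hσ : 0 < σ) (hf : StrongConvexOn univ σ f)
    (hp : HasDerivAt (fenchel f) p z) (hq : HasDerivAt (fenchel f) q y) :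
    fenchel f z + (y - z) * p + σ / 2 * (q - p) ^ 2 ≤ fenchel f y := by
  have hpmin := isMinOn_of_hasDerivAt_fenchel hσ hf hp
  have hqmin := isMinOn_of_hasDerivAt_fenchel hσ hf hq
  have hgrowth : f q - y * q + σ / 2 * (q - p) ^ 2 ≤ f p - y * p := by
    simpa using add_le_of_isMinOn_of_uniformConvexOn (strongConvexOn_sub_mul hf y) (mem_univ q)
      hqmin (mem_univ p)
  rw [fenchel_eq_of_isMinOn hpmin, fenchel_eq_of_isMinOn hqmin]
  linarith

end FenchelConjugate

theorem convex_basePolytope {V : Type*} [Fintype V] (F : Finset V → ℝ) :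
    Convex ℝ (basePolytope F) := by
  have hlin (A : Finset V) : IsLinearMap ℝ fun w : V → ℝ => ∑ i ∈ A, w i :=
    ⟨fun _ _ => Finset.sum_add_distrib, fun _ _ => (Finset.mul_sum _ _ _).symm⟩
  simp only [basePolytope, ofPred_and, ofPred_forall]
  exact (convex_iInter fun A => convex_halfSpace_le (hlin A) (F A)).inter
    (convex_hyperplane (hlin Finset.univ) (F Finset.univ))

theorem sum_mul_sub_nonneg_of_isMinOn {V : Type*} [Fintype V] {S : Set (V → ℝ)}
    (hS : Convex ℝ S) {h : V → ℝ → ℝ} {h' u v : V → ℝ}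
    (hh : ∀ i, HasDerivAt (h i) (h' i) (u i)) (hu : u ∈ S)
    (hmin : IsMinOn (fun v => ∑ i, h i (v i)) S u) (hv : v ∈ S) :
    0 ≤ ∑ i, h' i * (v i - u i) := by
  have hderiv : HasFDerivAt (fun v : V → ℝ => ∑ i, h i (v i))
      (∑ i, h' i • ContinuousLinearMap.proj (R := ℝ) (φ := fun _ : V => ℝ) i) u :=
    HasFDerivAt.fun_sum fun i _ => (hh i).comp_hasFDerivAt u (hasFDerivAt_apply i u)
  simpa using hmin.localize.hasFDerivWithinAt_nonneg hderiv.hasFDerivWithinAt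
    (sub_mem_posTangentConeAt_of_segment_subset (hS.segment_subset hu hv))

theorem stmt8_general {V : Type*} [Fintype V] {S : Set (V → ℝ)} (hS : Convex ℝ S)
    {f : V → ℝ → ℝ} {σ : ℝ} (hσ : 0 < σ) (hf : ∀ i, StrongConvexOn univ σ (f i))
    {w wstar x xstar : V → ℝ} (hx : ∀ i, HasDerivAt (fenchel (f i)) (x i) (-w i))
    (hxstar : ∀ i, HasDerivAt (fenchel (f i)) (xstar i) (-wstar i)) (hw : w ∈ S)
    (hwstar : wstar ∈ S) (hmin : IsMinOn (fun v => ∑ i, fenchel (f i) (-v i)) S wstar) {ε : ℝ}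
    (happrox : ∑ i, fenchel (f i) (-w i) ≤ ∑ i, fenchel (f i) (-wstar i) + ε) :
    √(∑ i, (x i - xstar i) ^ 2) ≤ √(2 * ε / σ) := by
  have hopt : 0 ≤ ∑ i, (-w i - -wstar i) * xstar i := by
    have hneg (i : V) : HasDerivAt (fun t => fenchel (f i) (-t)) (-xstar i) (wstar i) := by
      simpa using! (hxstar i).scomp (wstar i) (hasDerivAt_neg (wstar i))
    refine (sum_mul_sub_nonneg_of_isMinOn hS hneg hwstar hmin hw).trans_eq ?_
    exact Finset.sum_congr rfl fun i _ => by ring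
  have hgap := Finset.sum_le_sum fun i (_ : i ∈ Finset.univ) =>
    fenchel_add_mul_add_sq_le hσ (hf i) (hxstar i) (hx i)
  rw [Finset.sum_add_distrib, Finset.sum_add_distrib, ← Finset.mul_sum] at hgap
  refine Real.sqrt_le_sqrt ((le_div_iff₀ hσ).2 ?_)
  linarith

/-- If `w ∈ B(F)` is an `ε`-approximate minimizer of `w ↦ Σ_i ψ_i*(−w_i)` over `B(F)`
(with minimizer `w*`), where each `ψ_i` is twice differentiable with `σ ≤ ψ_i'' ≤ L`,
then the corresponding primal points `x_i = (ψ_i*)'(−w_i)`, `x*_i = (ψ_i*)'(−w*_i)`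
satisfy `‖x − x*‖₂ ≤ √(2 L ε / σ²)`. -/
theorem stmt8 {V : Type*} [DecidableEq V] [Fintype V]
    (n : ℕ) (hn : Fintype.card V = n)
    (F : Finset V → ℝ) (hF : Submodular F) (hF0 : F ∅ = 0)
    (ψ ψ' ψ'' : V → ℝ → ℝ)
    (hd1 : ∀ i x, HasDerivAt (ψ i) (ψ' i x) x)
    (hd2 : ∀ i x, HasDerivAt (ψ' i) (ψ'' i x) x)
    (σ L : ℝ) (hσ : 0 < σ) (hσL : σ ≤ L)
    (hψ'' : ∀ i x, σ ≤ ψ'' i x ∧ ψ'' i x ≤ L)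
    (ψs' : V → ℝ → ℝ)
    (hds : ∀ i z, HasDerivAt (fenchel (ψ i)) (ψs' i z) z)
    (wstar : V → ℝ) (hwstarB : wstar ∈ basePolytope F)
    (hwstarMin : ∀ w ∈ basePolytope F,
      ∑ i, fenchel (ψ i) (-(wstar i)) ≤ ∑ i, fenchel (ψ i) (-(w i)))
    (w : V → ℝ) (hwB : w ∈ basePolytope F)
    (ε : ℝ) (hε : 0 ≤ ε)
    (happrox : ∑ i, fenchel (ψ i) (-(w i)) ≤ ∑ i, fenchel (ψ i) (-(wstar i)) + ε) :
    Real.sqrt (∑ i, (ψs' i (-(w i)) - ψs' i (-(wstar i))) ^ 2) ≤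
      Real.sqrt (2 * L * ε / σ ^ 2) := by
  have hconv (i : V) : StrongConvexOn univ σ (ψ i) :=
    strongConvexOn_of_hasDerivWithinAt2_ge convex_univ
      (fun x _ => (hd1 i x).continuousAt.continuousWithinAt)
      (fun x _ => (hd1 i x).hasDerivWithinAt) (fun x _ => (hd2 i x).hasDerivWithinAt)
      fun x _ => (hψ'' i x).1
  calc √(∑ i, (ψs' i (-(w i)) - ψs' i (-(wstar i))) ^ 2) ≤ √(2 * ε / σ) :=
        stmt8_general (convex_basePolytope F) hσ hconv (fun i => hds i _) (fun i => hds i _) hwB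
          hwstarB hwstarMin happrox
    _ = √(2 * σ * ε / σ ^ 2) := by congr 1; field_simp
    _ ≤ √(2 * L * ε / σ ^ 2) := by gcongr
end

section
/- Let V be a finite set with distinguished distinct vertices s, t ∈ V, and let c : V × V → ℝ be nonnegative edge capacities. Then there exists a unique minimal minimum s,t-cut: a set S with s ∈ S ⊆ V \ {t} such that c⁺(S) ≤ c⁺(S') for every s,t-cut S', and S ⊆ S' for every s,t-cut S' with c⁺(S') = c⁺(S). -/
section Submodular

variable {α β : Type*}

/-- A function on a lattice is submodular on a set `L` if `f (a ⊓ b) + f (a ⊔ b) ≤ f a + f b` for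
all `a, b ∈ L`. The set `L` need not be a sublattice, so `a ⊓ b` and `a ⊔ b` may lie outside it. -/
def SubmodularOn [Lattice α] [Add β] [LE β] (f : α → β) (L : Set α) : Prop :=
  ∀ ⦃a⦄, a ∈ L → ∀ ⦃b⦄, b ∈ L → f (a ⊓ b) + f (a ⊔ b) ≤ f a + f b

/-- The minimizers of `f` on `L`: the points of `L` at which `f` attains its minimum over `L`. The
minimum `s,t`-cuts are the minimizers of the capacity on the set of `s,t`-cuts. -/
def minimizers [Preorder β] (f : α → β) (L : Set α) : Set α :=
  {a ∈ L | IsMinOn f L a}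

lemma minimizers_subset [Preorder β] (f : α → β) (L : Set α) : minimizers f L ⊆ L :=
  Set.sep_subset _ _

lemma minimizers_nonempty [LinearOrder β] (f : α → β) {L : Set α} (hfin : L.Finite)
    (hne : L.Nonempty) : (minimizers f L).Nonempty :=
  Set.exists_min_image L f hfin hne

lemma mem_minimizers_iff_of_mem [PartialOrder β] {f : α → β} {L : Set α} {a b : α}
    (ha : a ∈ minimizers f L) : b ∈ minimizers f L ↔ b ∈ L ∧ f b = f a := by
  refine ⟨fun hb => ⟨hb.1, le_antisymm (hb.2 ha.1) (ha.2 hb.1)⟩, fun ⟨hbL, hba⟩ => ⟨hbL, ?_⟩⟩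
  exact fun x hx => hba.trans_le (ha.2 hx)

lemma isLeast_minimizers_iff [Preorder α] [PartialOrder β] {f : α → β} {L : Set α} {a : α} :
    IsLeast (minimizers f L) a ↔
      a ∈ L ∧ (∀ b ∈ L, f a ≤ f b) ∧ ∀ b ∈ L, f b = f a → a ≤ b := by
  constructor
  · rintro ⟨ha, hle⟩
    exact ⟨ha.1, ha.2, fun b hb hba => hle ((mem_minimizers_iff_of_mem ha).2 ⟨hb, hba⟩)⟩
  · rintro ⟨haL, hmin, hle⟩
    have ha : a ∈ minimizers f L := ⟨haL, hmin⟩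
    refine ⟨ha, fun b hb => ?_⟩
    obtain ⟨hbL, hba⟩ := (mem_minimizers_iff_of_mem ha).1 hb
    exact hle b hbL hba

lemma infClosed_minimizers [Lattice α] [Add β] [Preorder β] [AddLeftMono β] [AddRightReflectLE β]
    {f : α → β} {L : Set α} (hL : IsSublattice L) (hf : SubmodularOn f L) :
    InfClosed (minimizers f L) := by
  rintro a ⟨haL, ha⟩ b ⟨hbL, hb⟩
  have h_sup : f b ≤ f (a ⊔ b) := hb (hL.supClosed haL hbL)
  have h_inf : f (a ⊓ b) ≤ f a := le_of_add_le_add_right <| calc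
    f (a ⊓ b) + f b ≤ f (a ⊓ b) + f (a ⊔ b) := by gcongr
    _ ≤ f a + f b := hf haL hbL
  exact ⟨hL.infClosed haL hbL, fun x hx => h_inf.trans (ha hx)⟩

lemma exists_isLeast_of_infClosed [SemilatticeInf α] {S : Set α} (hS : InfClosed S)
    (hfin : S.Finite) (hne : S.Nonempty) : ∃ a, IsLeast S a :=
  let ⟨a, ha⟩ := hfin.exists_minimal hne
  ⟨a, hS.codirectedOn.minimal_iff_isLeast.1 ha⟩

lemma exists_isLeast_minimizers [Lattice α] [Add β] [LinearOrder β] [AddLeftMono β]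
    [AddRightReflectLE β] {f : α → β} {L : Set α} (hL : IsSublattice L) (hfin : L.Finite)
    (hne : L.Nonempty) (hf : SubmodularOn f L) : ∃ a, IsLeast (minimizers f L) a :=
  exists_isLeast_of_infClosed (infClosed_minimizers hL hf) (hfin.subset (minimizers_subset f L))
    (minimizers_nonempty f hfin hne)

end Submodular

section Cut

variable {V : Type*}

/-- The `s,t`-cuts: the vertex sets containing the source `s` but not the sink `t`. -/
def stCuts (s t : V) : Set (Finset V) :=
  {S | s ∈ S ∧ t ∉ S}

lemma mem_stCuts {s t : V} {S : Finset V} : S ∈ stCuts s t ↔ s ∈ S ∧ t ∉ S :=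
  Iff.rfl

lemma stCuts_nonempty {s t : V} (hst : s ≠ t) : (stCuts s t).Nonempty :=
  ⟨{s}, Finset.mem_singleton_self s, Finset.notMem_singleton.2 hst.symm⟩

variable [DecidableEq V]

lemma isSublattice_stCuts (s t : V) : IsSublattice (stCuts s t) where
  supClosed _A hA _B hB :=
    ⟨Finset.mem_union_left _ hA.1, Finset.notMem_union.2 ⟨hA.2, hB.2⟩⟩
  infClosed _A hA _B hB :=
    ⟨Finset.mem_inter_of_mem hA.1 hB.1, fun ht => hA.2 (Finset.mem_of_mem_inter_left ht)⟩

variable [Fintype V]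

lemma cutVal_eq_sum_ite (c : V → V → ℝ) (S : Finset V) :
    cutVal c S = ∑ e : V × V, if e.1 ∈ S ∧ e.2 ∉ S then c e.1 e.2 else 0 := by
  rw [cutVal, ← Finset.sum_product', ← Finset.sum_filter]
  congr 1
  ext e
  simp

lemma submodularOn_cutVal {c : V → V → ℝ} (hc : ∀ u v, 0 ≤ c u v) (L : Set (Finset V)) :
    SubmodularOn (cutVal c) L := by
  intro A _ B _
  simp only [cutVal_eq_sum_ite, ← Finset.sum_add_distrib, Finset.inf_eq_inter,
    Finset.sup_eq_union, Finset.mem_inter, Finset.mem_union]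
  -- Pair by pair the two sides agree, except that a pair between `A \ B` and `B \ A` counts only on
  -- the right.
  refine Finset.sum_le_sum fun ⟨u, v⟩ _ => ?_
  have h_nonneg := hc u v
  grind only

end Cut

/-- On a finite vertex set with source `s`, sink `t` and nonnegative capacities `c`,
there is a unique *minimal minimum s,t-cut*: an `s,t`-cut `S` of minimum capacity that
is contained in every minimum `s,t`-cut. -/
theorem stmt11 {V : Type*} [DecidableEq V] [Fintype V]
    (s t : V) (hst : s ≠ t)
    (c : V → V → ℝ) (hc : ∀ u v : V, 0 ≤ c u v) :
    ∃! S : Finset V,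
      (s ∈ S ∧ t ∉ S) ∧
      (∀ S' : Finset V, s ∈ S' → t ∉ S' → cutVal c S ≤ cutVal c S') ∧
      (∀ S' : Finset V, s ∈ S' → t ∉ S' → cutVal c S' = cutVal c S → S ⊆ S') := by
  obtain ⟨S, hS⟩ := exists_isLeast_minimizers (isSublattice_stCuts s t) (Set.toFinite _)
    (stCuts_nonempty hst) (submodularOn_cutVal hc _)
  have h_unique : ∃! S, IsLeast (minimizers (cutVal c) (stCuts s t)) S :=
    ⟨S, hS, fun T hT => hT.unique hS⟩
  simpa only [isLeast_minimizers_iff, mem_stCuts, and_imp] using h_unique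
end

section
/- Let V be a finite set with distinct s, t ∈ V, and let c_λ : V × V → ℝ, λ ∈ ℝ, be parametric nonnegative capacities such that λ ↦ c_λ(s, v) is nondecreasing for every v, λ ↦ c_λ(v, t) is nonincreasing for every v, and c_λ(u, v) is constant in λ whenever u ≠ s and v ≠ t. Let λ₁ ≤ λ₂, and for i = 1, 2 let S_{λᵢ} be the unique minimal minimum s,t-cut with respect to capacities c_{λᵢ} (the minimum s,t-cut contained in every minimum s,t-cut of c_{λᵢ}). Then S_{λ₁} ⊆ S_{λ₂}. -/
/-- `S` is a minimum `s,t`-cut for capacities `c`. -/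
def IsMinCut {V : Type*} [Fintype V] [DecidableEq V] (s t : V) (c : V → V → ℝ)
    (S : Finset V) : Prop :=
  s ∈ S ∧ t ∉ S ∧ ∀ S' : Finset V, s ∈ S' → t ∉ S' → cutVal c S ≤ cutVal c S'

/-- `S` is the minimal minimum `s,t`-cut for capacities `c`: a minimum cut contained in
every minimum cut. -/
def IsMinimalMinCut {V : Type*} [Fintype V] [DecidableEq V] (s t : V) (c : V → V → ℝ)
    (S : Finset V) : Prop :=
  IsMinCut s t c S ∧ ∀ S' : Finset V, IsMinCut s t c S' → S ⊆ S'

section SumBetween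

variable {V M : Type*} [AddCommMonoid M]

/-- The total capacity of the edges from `A` to `B`. Cut values split into such sums over the
blocks `S ∩ T`, `S \ T`, `T \ S` and `(S ∪ T)ᶜ`. -/
def sumBetween (c : V → V → M) (A B : Finset V) : M :=
  ∑ u ∈ A, ∑ v ∈ B, c u v

lemma sumBetween_union_left [DecidableEq V] (c : V → V → M) {A A' : Finset V}
    (h : Disjoint A A') (B : Finset V) :
    sumBetween c (A ∪ A') B = sumBetween c A B + sumBetween c A' B :=
  Finset.sum_union h

lemma sumBetween_union_right [DecidableEq V] (c : V → V → M) (A : Finset V) {B B' : Finset V}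
    (h : Disjoint B B') :
    sumBetween c A (B ∪ B') = sumBetween c A B + sumBetween c A B' := by
  simp only [sumBetween, Finset.sum_union h, Finset.sum_add_distrib]

variable [PartialOrder M] [IsOrderedAddMonoid M]

lemma sumBetween_le_sumBetween {a b : V → V → M} {A B : Finset V}
    (h : ∀ u ∈ A, ∀ v ∈ B, a u v ≤ b u v) : sumBetween a A B ≤ sumBetween b A B :=
  Finset.sum_le_sum fun u hu => Finset.sum_le_sum (h u hu)

lemma sumBetween_nonneg {c : V → V → M} {A B : Finset V}
    (h : ∀ u ∈ A, ∀ v ∈ B, 0 ≤ c u v) : 0 ≤ sumBetween c A B :=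
  Finset.sum_nonneg fun u hu => Finset.sum_nonneg (h u hu)

end SumBetween

section CutVal

variable {V : Type*} [Fintype V] [DecidableEq V]

lemma cutVal_eq_sumBetween_compl (c : V → V → ℝ) (S : Finset V) :
    cutVal c S = sumBetween c S Sᶜ :=
  rfl

lemma cutVal_eq_sum_blocks (c : V → V → ℝ) (S T : Finset V) :
    cutVal c S =
      sumBetween c (S ∩ T) (T \ S) + sumBetween c (S ∩ T) (S ∪ T)ᶜ +
        (sumBetween c (S \ T) (T \ S) + sumBetween c (S \ T) (S ∪ T)ᶜ) := by
  have hS : S ∩ T ∪ S \ T = S := by grind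
  have hcompl : T \ S ∪ (S ∪ T)ᶜ = Sᶜ := by grind [Finset.mem_compl]
  have hdisj : Disjoint (S ∩ T) (S \ T) := (Finset.disjoint_sdiff_inter S T).symm
  have hdisj' : Disjoint (T \ S) (S ∪ T)ᶜ := by
    grind [Finset.disjoint_left, Finset.mem_compl]
  rw [← sumBetween_union_right c _ hdisj', ← sumBetween_union_right c _ hdisj',
    ← sumBetween_union_left c hdisj, hS, hcompl, cutVal_eq_sumBetween_compl]

lemma cutVal_inter_eq_sum_blocks (c : V → V → ℝ) (S T : Finset V) :
    cutVal c (S ∩ T) =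
      sumBetween c (S ∩ T) (S \ T) + sumBetween c (S ∩ T) (T \ S) +
        sumBetween c (S ∩ T) (S ∪ T)ᶜ := by
  have hcompl : S \ T ∪ T \ S ∪ (S ∪ T)ᶜ = (S ∩ T)ᶜ := by grind [Finset.mem_compl]
  have hdisj : Disjoint (S \ T) (T \ S) := disjoint_sdiff_sdiff
  have hdisj' : Disjoint (S \ T ∪ T \ S) (S ∪ T)ᶜ := by
    grind [Finset.disjoint_left, Finset.mem_compl]
  rw [← sumBetween_union_right c _ hdisj, ← sumBetween_union_right c _ hdisj', hcompl,
    cutVal_eq_sumBetween_compl]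

lemma cutVal_union_eq_sum_blocks (c : V → V → ℝ) (S T : Finset V) :
    cutVal c (S ∪ T) =
      sumBetween c (S ∩ T) (S ∪ T)ᶜ + sumBetween c (S \ T) (S ∪ T)ᶜ +
        sumBetween c (T \ S) (S ∪ T)ᶜ := by
  have hunion : S ∩ T ∪ S \ T ∪ T \ S = S ∪ T := by grind
  have hdisj : Disjoint (S ∩ T) (S \ T) := (Finset.disjoint_sdiff_inter S T).symm
  have hdisj' : Disjoint (S ∩ T ∪ S \ T) (T \ S) := by grind [Finset.disjoint_left]
  rw [← sumBetween_union_left c hdisj, ← sumBetween_union_left c hdisj', hunion,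
    cutVal_eq_sumBetween_compl]

theorem cutVal_inter_add_cutVal_union_le {a b : V → V → ℝ} {S T : Finset V}
    (ha : ∀ u ∈ S \ T, ∀ v ∈ T \ S, 0 ≤ a u v)
    (hb : ∀ u ∈ T \ S, ∀ v ∈ S \ T, 0 ≤ b u v)
    (hab : ∀ u ∈ S ∩ T, ∀ v ∈ S \ T, a u v ≤ b u v)
    (hba : ∀ u ∈ S \ T, ∀ v ∈ (S ∪ T)ᶜ, b u v ≤ a u v) :
    cutVal a (S ∩ T) + cutVal b (S ∪ T) ≤ cutVal a S + cutVal b T := by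
  have hT := cutVal_eq_sum_blocks b T S
  rw [Finset.inter_comm T S, Finset.union_comm T S] at hT
  rw [cutVal_eq_sum_blocks a S T, hT, cutVal_inter_eq_sum_blocks, cutVal_union_eq_sum_blocks]
  linarith [sumBetween_nonneg ha, sumBetween_nonneg hb, sumBetween_le_sumBetween hab,
    sumBetween_le_sumBetween hba]

end CutVal

section MinCut

variable {V : Type*} [Fintype V] [DecidableEq V] {s t : V} {a b : V → V → ℝ} {S T : Finset V}

theorem IsMinCut.inter_of_cutVal_add_le (hS : IsMinCut s t a S) (hT : IsMinCut s t b T)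
    (h : cutVal a (S ∩ T) + cutVal b (S ∪ T) ≤ cutVal a S + cutVal b T) :
    IsMinCut s t a (S ∩ T) := by
  obtain ⟨hsS, htS, hminS⟩ := hS
  obtain ⟨hsT, htT, hminT⟩ := hT
  have hunion : cutVal b T ≤ cutVal b (S ∪ T) := hminT _ (by grind) (by grind)
  refine ⟨by grind, by grind, fun S' hs' ht' => ?_⟩
  linarith [hminS S' hs' ht']

theorem IsMinCut.inter (hnonneg : ∀ u ≠ s, ∀ v ≠ t, 0 ≤ a u v)
    (hsource : ∀ v ≠ t, a s v ≤ b s v) (hsink : ∀ u ≠ s, b u t ≤ a u t)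
    (hinner : ∀ u ≠ s, ∀ v ≠ t, a u v = b u v)
    (hS : IsMinCut s t a S) (hT : IsMinCut s t b T) : IsMinCut s t a (S ∩ T) := by
  have hab : ∀ u, ∀ v ≠ t, a u v ≤ b u v := fun u v hv => by
    obtain rfl | hu := eq_or_ne u s
    exacts [hsource v hv, (hinner u hu v hv).le]
  have hba : ∀ u ≠ s, ∀ v, b u v ≤ a u v := fun u hu v => by
    obtain rfl | hv := eq_or_ne v t
    exacts [hsink u hu, (hinner u hu v hv).ge]
  have ⟨hsS, htS, _⟩ := hS
  have ⟨hsT, htT, _⟩ := hT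
  have hST : ∀ v ∈ S \ T, v ≠ s ∧ v ≠ t := by grind
  have hTS : ∀ v ∈ T \ S, v ≠ s ∧ v ≠ t := by grind
  refine hS.inter_of_cutVal_add_le hT (cutVal_inter_add_cutVal_union_le ?_ ?_ ?_ ?_)
  · exact fun u hu v hv => hnonneg u (hST u hu).1 v (hTS v hv).2
  · exact fun u hu v hv => (hnonneg u (hTS u hu).1 v (hST v hv).2).trans
      (hab u v (hST v hv).2)
  · exact fun u _ v hv => hab u v (hST v hv).2
  · exact fun u hu v _ => hba u (hST u hu).1 v

end MinCut

theorem stmt13_general {V : Type*} [Fintype V] [DecidableEq V] {s t : V} {a b : V → V → ℝ}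
    (hnonneg : ∀ u ≠ s, ∀ v ≠ t, 0 ≤ a u v)
    (hsource : ∀ v ≠ t, a s v ≤ b s v) (hsink : ∀ u ≠ s, b u t ≤ a u t)
    (hinner : ∀ u ≠ s, ∀ v ≠ t, a u v = b u v)
    {S T : Finset V} (hS : IsMinimalMinCut s t a S) (hT : IsMinCut s t b T) : S ⊆ T :=
  (hS.2 _ (hS.1.inter hnonneg hsource hsink hinner hT)).trans Finset.inter_subset_right

/-- For parametric nonnegative capacities (nondecreasing on edges out of `s`,
nonincreasing on edges into `t`, constant otherwise), if `λ₁ ≤ λ₂` and `S_{λᵢ}` is the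
minimal minimum `s,t`-cut for `c_{λᵢ}`, then `S_{λ₁} ⊆ S_{λ₂}`. -/
theorem stmt13 {V : Type*} [DecidableEq V] [Fintype V]
    (s t : V) (hst : s ≠ t)
    (c : ℝ → V → V → ℝ)
    (hnn : ∀ (lam : ℝ) (u v : V), 0 ≤ c lam u v)
    (hmono : ∀ v : V, Monotone fun lam => c lam s v)
    (hanti : ∀ v : V, Antitone fun lam => c lam v t)
    (hconst : ∀ u v : V, u ≠ s → v ≠ t → ∀ lam lam' : ℝ, c lam u v = c lam' u v)
    (lam1 lam2 : ℝ) (h12 : lam1 ≤ lam2)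
    (S1 S2 : Finset V)
    (h1 : IsMinimalMinCut s t (c lam1) S1) (h2 : IsMinimalMinCut s t (c lam2) S2) :
    S1 ⊆ S2 :=
  stmt13_general (fun u _ v _ => hnn lam1 u v) (fun v _ => hmono v h12) (fun u _ => hanti u h12)
    (fun u hu v hv => hconst u v hu hv lam1 lam2) h1 h2.1
end

section
/- Let V be a finite set with distinct s, t ∈ V, and let c_λ : V × V → ℝ, λ ∈ ℝ, be parametric nonnegative capacities such that λ ↦ c_λ(s, v) is nondecreasing for every v, λ ↦ c_λ(v, t) is nonincreasing for every v, and c_λ(u, v) is constant in λ whenever u ≠ s and v ≠ t. Fix λ ∈ ℝ and let S_λ be the unique minimal minimum s,t-cut with respect to capacities c_λ. Then: (1) for every λ' ≥ λ, the minimum of c_{λ'}⁺(S') over all s,t-cuts S' equals the minimum of c_{λ'}⁺(S') over all s,t-cuts S' with S_λ ⊆ S'; (2) for every λ' ≤ λ, the minimum of c_{λ'}⁺(S') over all s,t-cuts S' equals the minimum of c_{λ'}⁺(S') over all s,t-cuts S' with S' ⊆ S_λ. -/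
/-- The comparison of the capacities at two values of the parameter: passing from `c` to `c'`,
edges leaving `s` may only become more expensive and edges entering `t` only cheaper. The two
fields together force `c` and `c'` to agree on every edge that neither leaves `s` nor enters `t`;
the edge from `s` to `t`, which lies in every cut, is left unconstrained. -/
structure ParametricLE {V : Type*} (s t : V) (c c' : V → V → ℝ) : Prop where
  le_of_ne_sink : ∀ u v, v ≠ t → c u v ≤ c' u v
  ge_of_ne_source : ∀ u v, u ≠ s → c' u v ≤ c u v

lemma parametricLE_of_le {V Λ : Type*} [Preorder Λ] {s t : V} {c : Λ → V → V → ℝ}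
    (hmono : ∀ v ≠ t, Monotone fun lam => c lam s v)
    (hanti : ∀ u ≠ s, Antitone fun lam => c lam u t)
    (hconst : ∀ u v, u ≠ s → v ≠ t → ∀ lam lam', c lam u v = c lam' u v)
    {lam lam' : Λ} (hle : lam ≤ lam') : ParametricLE s t (c lam) (c lam') where
  le_of_ne_sink u v hv := by
    rcases eq_or_ne u s with rfl | hu
    · exact hmono v hv hle
    · exact (hconst u v hu hv lam lam').le
  ge_of_ne_source u v hu := by
    rcases eq_or_ne v t with rfl | hv
    · exact hanti u hu hle
    · exact (hconst u v hu hv lam' lam).le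

section Cuts

variable {V : Type*} [Fintype V] [DecidableEq V] {s t : V} {c c' : V → V → ℝ} {S T X : Finset V}

lemma cutVal_sub_cutVal_of_subset (c : V → V → ℝ) (hST : S ⊆ T) :
    cutVal c T - cutVal c S =
      ∑ u ∈ T \ S, ∑ v ∈ Tᶜ, c u v - ∑ u ∈ S, ∑ v ∈ T \ S, c u v := by
  have hT : cutVal c T = ∑ u ∈ T \ S, ∑ v ∈ Tᶜ, c u v + ∑ u ∈ S, ∑ v ∈ Tᶜ, c u v :=
    (Finset.sum_sdiff hST).symm
  have hS : cutVal c S = ∑ u ∈ S, ∑ v ∈ T \ S, c u v + ∑ u ∈ S, ∑ v ∈ Tᶜ, c u v := by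
    rw [cutVal, ← Finset.sum_add_distrib]
    refine Finset.sum_congr rfl fun u _ => ?_
    rw [← Finset.sum_sdiff (Finset.compl_subset_compl.2 hST), compl_sdiff_compl]
  rw [hT, hS]
  ring

lemma cutVal_union_add_cutVal_inter_le (A B : Finset V)
    (hAB : ∀ u ∈ A \ B, ∀ v ∈ B \ A, 0 ≤ c u v) (hBA : ∀ u ∈ B \ A, ∀ v ∈ A \ B, 0 ≤ c u v) :
    cutVal c (A ∪ B) + cutVal c (A ∩ B) ≤ cutVal c A + cutVal c B := by
  have hunion := cutVal_sub_cutVal_of_subset c (Finset.subset_union_left (s₁ := A) (s₂ := B))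
  have hinter := cutVal_sub_cutVal_of_subset c (Finset.inter_subset_right (s₁ := A) (s₂ := B))
  rw [Finset.union_sdiff_left] at hunion
  rw [Finset.sdiff_inter_self_right] at hinter
  have hadded : ∑ u ∈ B \ A, ∑ v ∈ (A ∪ B)ᶜ, c u v ≤ ∑ u ∈ B \ A, ∑ v ∈ Bᶜ, c u v := by
    refine Finset.sum_le_sum fun u hu => ?_
    refine Finset.sum_le_sum_of_subset_of_nonneg
      (Finset.compl_subset_compl.2 Finset.subset_union_right) fun v hv hv' => hBA u hu v ?_
    grind [Finset.mem_compl]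
  have hremoved : ∑ u ∈ A ∩ B, ∑ v ∈ B \ A, c u v ≤ ∑ u ∈ A, ∑ v ∈ B \ A, c u v := by
    refine Finset.sum_le_sum_of_subset_of_nonneg Finset.inter_subset_left fun u hu hu' => ?_
    exact Finset.sum_nonneg fun v hv => hAB u (by grind) v hv
  linarith

lemma ParametricLE.cutVal_sub_cutVal_le (h : ParametricLE s t c c') (hST : S ⊆ T) (hs : s ∈ S)
    (ht : t ∉ T) : cutVal c' T - cutVal c' S ≤ cutVal c T - cutVal c S := by
  rw [cutVal_sub_cutVal_of_subset c hST, cutVal_sub_cutVal_of_subset c' hST]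
  refine sub_le_sub ?added ?removed
  case added =>
    refine Finset.sum_le_sum fun u hu => Finset.sum_le_sum fun v _ => h.ge_of_ne_source u v ?_
    rintro rfl
    exact (Finset.mem_sdiff.1 hu).2 hs
  case removed =>
    refine Finset.sum_le_sum fun u _ => Finset.sum_le_sum fun v hv => h.le_of_ne_sink u v ?_
    rintro rfl
    exact ht (Finset.mem_sdiff.1 hv).1

lemma cutVal_union_add_cutVal_inter_le_of_mem (hnn : ∀ u v, u ≠ s → v ≠ t → 0 ≤ c u v)
    (hsX : s ∈ X) (htX : t ∉ X) (hsS : s ∈ S) (htS : t ∉ S) :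
    cutVal c (X ∪ S) + cutVal c (X ∩ S) ≤ cutVal c X + cutVal c S :=
  cutVal_union_add_cutVal_inter_le X S
    (fun u hu v hv => hnn u v (by grind) (by grind))
    (fun u hu v hv => hnn u v (by grind) (by grind))

lemma IsMinCut.cutVal_union_le (hS : IsMinCut s t c S) (hnn : ∀ u v, u ≠ s → v ≠ t → 0 ≤ c u v)
    (h : ParametricLE s t c c') (hsX : s ∈ X) (htX : t ∉ X) :
    cutVal c' (X ∪ S) ≤ cutVal c' X := by
  obtain ⟨hsS, htS, hmin⟩ := hS
  have hincr : cutVal c' (X ∪ S) - cutVal c' X ≤ cutVal c (X ∪ S) - cutVal c X :=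
    h.cutVal_sub_cutVal_le Finset.subset_union_left hsX (by simp [htX, htS])
  have hsub := cutVal_union_add_cutVal_inter_le_of_mem hnn hsX htX hsS htS
  have hinter : cutVal c S ≤ cutVal c (X ∩ S) := hmin _ (by simp [hsX, hsS]) (by simp [htX])
  linarith

lemma IsMinCut.cutVal_inter_le (hS : IsMinCut s t c S) (hnn : ∀ u v, u ≠ s → v ≠ t → 0 ≤ c u v)
    (h : ParametricLE s t c' c) (hsX : s ∈ X) (htX : t ∉ X) :
    cutVal c' (X ∩ S) ≤ cutVal c' X := by
  obtain ⟨hsS, htS, hmin⟩ := hS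
  have hincr : cutVal c X - cutVal c (X ∩ S) ≤ cutVal c' X - cutVal c' (X ∩ S) :=
    h.cutVal_sub_cutVal_le Finset.inter_subset_left (by simp [hsX, hsS]) htX
  have hsub := cutVal_union_add_cutVal_inter_le_of_mem hnn hsX htX hsS htS
  have hunion : cutVal c S ≤ cutVal c (X ∪ S) := hmin _ (by simp [hsX]) (by simp [htX, htS])
  linarith

end Cuts

lemma csInf_image_eq_of_subset_of_forall_exists_le {α β : Type*}
    [ConditionallyCompleteLinearOrder β] {f : α → β} {P Q : Set α} (hQP : Q ⊆ P)
    (h : ∀ x ∈ P, ∃ y ∈ Q, f y ≤ f x) : sInf (f '' P) = sInf (f '' Q) := by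
  refine csInf_eq_csInf_of_forall_exists_le ?_ ?_
  · rintro _ ⟨x, hx, rfl⟩
    obtain ⟨y, hy, hyx⟩ := h x hx
    exact ⟨f y, Set.mem_image_of_mem f hy, hyx⟩
  · rintro _ ⟨y, hy, rfl⟩
    exact ⟨f y, Set.mem_image_of_mem f (hQP hy), le_rfl⟩

theorem stmt14_general {V Λ : Type*} [DecidableEq V] [Fintype V] [Preorder Λ]
    {s t : V} {c : Λ → V → V → ℝ}
    (hmono : ∀ v ≠ t, Monotone fun lam => c lam s v)
    (hanti : ∀ u ≠ s, Antitone fun lam => c lam u t)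
    (hconst : ∀ u v : V, u ≠ s → v ≠ t → ∀ lam lam' : Λ, c lam u v = c lam' u v)
    {lam : Λ} (hnn : ∀ u v : V, u ≠ s → v ≠ t → 0 ≤ c lam u v)
    {Slam : Finset V} (hS : IsMinCut s t (c lam) Slam) :
    (∀ lam' : Λ, lam ≤ lam' →
      sInf (cutVal (c lam') '' {S : Finset V | s ∈ S ∧ t ∉ S}) =
        sInf (cutVal (c lam') '' {S : Finset V | s ∈ S ∧ t ∉ S ∧ Slam ⊆ S})) ∧
    (∀ lam' : Λ, lam' ≤ lam →
      sInf (cutVal (c lam') '' {S : Finset V | s ∈ S ∧ t ∉ S}) =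
        sInf (cutVal (c lam') '' {S : Finset V | s ∈ S ∧ t ∉ S ∧ S ⊆ Slam})) := by
  have ⟨hsS, htS, _⟩ := hS
  constructor
  · intro lam' hle
    refine csInf_image_eq_of_subset_of_forall_exists_le (fun S h => ⟨h.1, h.2.1⟩) ?_
    rintro X ⟨hsX, htX⟩
    exact ⟨X ∪ Slam, ⟨by simp [hsX], by simp [htX, htS], Finset.subset_union_right⟩,
      hS.cutVal_union_le hnn (parametricLE_of_le hmono hanti hconst hle) hsX htX⟩
  · intro lam' hle
    refine csInf_image_eq_of_subset_of_forall_exists_le (fun S h => ⟨h.1, h.2.1⟩) ?_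
    rintro X ⟨hsX, htX⟩
    exact ⟨X ∩ Slam, ⟨by simp [hsX, hsS], by simp [htX], Finset.inter_subset_right⟩,
      hS.cutVal_inter_le hnn (parametricLE_of_le hmono hanti hconst hle) hsX htX⟩

/-- Contraction lemma: let `S_λ` be the minimal minimum `s,t`-cut at parameter `λ`.
Then (1) for `λ' ≥ λ`, the minimum cut capacity at `λ'` over all cuts equals the
minimum over cuts containing `S_λ`, and (2) for `λ' ≤ λ` it equals the minimum over
cuts contained in `S_λ`. -/
theorem stmt14 {V : Type*} [DecidableEq V] [Fintype V]
    (s t : V) (hst : s ≠ t)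
    (c : ℝ → V → V → ℝ)
    (hnn : ∀ (lam : ℝ) (u v : V), 0 ≤ c lam u v)
    (hmono : ∀ v : V, Monotone fun lam => c lam s v)
    (hanti : ∀ v : V, Antitone fun lam => c lam v t)
    (hconst : ∀ u v : V, u ≠ s → v ≠ t → ∀ lam lam' : ℝ, c lam u v = c lam' u v)
    (lam : ℝ) (Slam : Finset V) (hS : IsMinimalMinCut s t (c lam) Slam) :
    (∀ lam' : ℝ, lam ≤ lam' →
      sInf (cutVal (c lam') '' {S : Finset V | s ∈ S ∧ t ∉ S}) =
        sInf (cutVal (c lam') '' {S : Finset V | s ∈ S ∧ t ∉ S ∧ Slam ⊆ S})) ∧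
    (∀ lam' : ℝ, lam' ≤ lam →
      sInf (cutVal (c lam') '' {S : Finset V | s ∈ S ∧ t ∉ S}) =
        sInf (cutVal (c lam') '' {S : Finset V | s ∈ S ∧ t ∉ S ∧ S ⊆ Slam})) :=
  stmt14_general (fun v _ => hmono v) (fun u _ => hanti u) hconst (fun u v _ _ => hnn lam u v) hS.1
end

section
/- Let h : ℝ^n → ℝ be a convex function, let B, P ⊆ ℝ^n, let w ∈ B, and let α ≥ 1 be a real number such that w + (1/α) · P ⊆ B ⊆ w + P, where w + c · P = { w + c p : p ∈ P }. Suppose w* minimizes h over B and w' minimizes h over w + (1/α) · P. Then h(w') − h(w*) ≤ (1 − 1/α) · (h(w) − h(w*)). -/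
section ConvexOn

variable {𝕜 E β : Type*} [Ring 𝕜] [PartialOrder 𝕜] [IsOrderedAddMonoid 𝕜]
  [AddCommGroup E] [Module 𝕜 E]
  [AddCommGroup β] [PartialOrder β] [IsOrderedAddMonoid β] [Module 𝕜 β]
  {s : Set E} {f : E → β} {t : 𝕜}

theorem convexOn_map_add_smul_sub_le (hf : ConvexOn 𝕜 s f) {x p : E} (hx : x ∈ s)
    (hxp : x + p ∈ s) (ht₀ : 0 ≤ t) (ht₁ : t ≤ 1) :
    f (x + t • p) - f (x + p) ≤ (1 - t) • (f x - f (x + p)) :=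
  calc
    f (x + t • p) - f (x + p) = f ((1 - t) • x + t • (x + p)) - f (x + p) := by
      rw [smul_add, ← add_assoc, Convex.combo_self (sub_add_cancel 1 t)]
    _ ≤ (1 - t) • f x + t • f (x + p) - f (x + p) :=
      sub_le_sub_right (hf.2 hx hxp (sub_nonneg.2 ht₁) ht₀ (sub_add_cancel 1 t)) _
    _ = (1 - t) • (f x - f (x + p)) := by
      simp only [sub_smul, one_smul, smul_sub]
      abel

theorem stmt19_general (hf : ConvexOn 𝕜 s f) {P : Set E} {w z w' : E} (hw : w ∈ s) (hz : z ∈ s)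
    (ht₀ : 0 ≤ t) (ht₁ : t ≤ 1) (hzP : ∃ p ∈ P, z = w + p)
    (hw' : ∀ p ∈ P, f w' ≤ f (w + t • p)) :
    f w' - f z ≤ (1 - t) • (f w - f z) := by
  obtain ⟨p, hp, rfl⟩ := hzP
  calc
    f w' - f (w + p) ≤ f (w + t • p) - f (w + p) := sub_le_sub_right (hw' p hp) _
    _ ≤ (1 - t) • (f w - f (w + p)) := convexOn_map_add_smul_sub_le hf hw hz ht₀ ht₁

end ConvexOn

/-- Sandwiching progress lemma: let `h : ℝ^n → ℝ` be convex, `w ∈ B`, `α ≥ 1`, and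
suppose `w + (1/α)·P ⊆ B ⊆ w + P`.  If `w*` minimizes `h` over `B` and `w'` minimizes
`h` over `w + (1/α)·P`, then `h w' − h w* ≤ (1 − 1/α)(h w − h w*)`. -/
theorem stmt19 (n : ℕ) (h : (Fin n → ℝ) → ℝ)
    (hconv : ConvexOn ℝ Set.univ h)
    (B P : Set (Fin n → ℝ)) (w : Fin n → ℝ) (hwB : w ∈ B)
    (α : ℝ) (hα : 1 ≤ α)
    (hPB : {x : Fin n → ℝ | ∃ p ∈ P, x = w + (1 / α) • p} ⊆ B)
    (hBP : B ⊆ {x : Fin n → ℝ | ∃ p ∈ P, x = w + p})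
    (wstar : Fin n → ℝ) (hws : wstar ∈ B)
    (hwsmin : ∀ z ∈ B, h wstar ≤ h z)
    (w' : Fin n → ℝ)
    (hw' : w' ∈ {x : Fin n → ℝ | ∃ p ∈ P, x = w + (1 / α) • p})
    (hw'min : ∀ z ∈ {x : Fin n → ℝ | ∃ p ∈ P, x = w + (1 / α) • p}, h w' ≤ h z) :
    h w' - h wstar ≤ (1 - 1 / α) * (h w - h wstar) :=
  stmt19_general hconv (Set.mem_univ w) (Set.mem_univ wstar) (by positivity)
    (div_le_one_of_le₀ hα (by positivity)) (hBP hws) fun p hp ↦ hw'min _ ⟨p, hp, rfl⟩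
end
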